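/- There is an absolute constant C such that the following holds: for every integer d ≥ 2, every real X ≥ 2, with V := (dX)², and every real t with |t| ≤ X², one has Σ*_{χ mod d} |∫_{−V}^{V} L(3/2 + it + iu, χ) · X^{1+iu}/(1+iu) · i du|⁴ ≤ C · d · (1+|t|) · (log(dX))⁸, where the integral is the integral of L(s + 1/2 + it, χ)·X^s/s over the vertical segment from s = 1 − iV to s = 1 + iV. -/

import Mathlib

open MeasureTheory Real Complex

/-- The sum of `f` over all primitive Dirichlet characters modulo `d`
(a finite sum, since there are finitely many Dirichlet characters modulo `d`). -/
noncomputable def sumPrimitive (d : ℕ) (f : DirichletCharacter ℂ d → ℝ) : ℝ :=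
  ∑ᶠ χ ∈ {χ : DirichletCharacter ℂ d | χ.IsPrimitive}, f χ

/-!
Expand `L(s + 1/2 + it, χ)` in its absolutely convergent Dirichlet series on `Re s = 1` and
integrate term by term. Shifting contours shows that the truncated Perron kernel is a fixed bounded
number for `n ≤ X` and `0` for `n > X`, up to an error `O(1 / n)` away from `X`; hence the integral
is a bounded multiple of `∑_{n ≤ X} χ(n) n^{-1/2-it}` plus `O(log (dX))`.

In the fourth moment of this polynomial, the terms with `n ≤ √(d (1 + |t|))` are controlled by
orthogonality of characters applied to their squared sum. For the larger `n`, Gauss sums give a dual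
sum over residues `a` mod `d` whose coefficients are exponential sums with phase
`2π a n / d - t log n`. The Kusmin–Landau and van der Corput inequalities show that these
coefficients decay in `a`, so that the same mean value applies to the dual sum.
-/

/-! ### Mean values of character sums -/

section MeanValues

open Finset

lemma sum_Icc_one_div_le_one_add_log (N : ℕ) :
    ∑ n ∈ Icc 1 N, (1 : ℝ) / n ≤ 1 + Real.log N := by
  simpa [harmonic_eq_sum_Icc] using harmonic_le_one_add_log N

lemma card_divisorsAntidiagonal (n : ℕ) : #n.divisorsAntidiagonal = #n.divisors := by
  rw [← Nat.map_div_right_divisors, card_map]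

lemma card_divisors_div_eq_sum_divisorsAntidiagonal (n : ℕ) :
    (#n.divisors : ℝ) / n = ∑ p ∈ n.divisorsAntidiagonal, 1 / (p.1 : ℝ) * (1 / p.2) := by
  have hterm : ∀ p ∈ n.divisorsAntidiagonal, 1 / (p.1 : ℝ) * (1 / p.2) = 1 / n := fun p hp => by
    rw [← (Nat.mem_divisorsAntidiagonal.mp hp).1, Nat.cast_mul, one_div_mul_one_div]
  rw [sum_congr rfl hterm, sum_const, card_divisorsAntidiagonal, nsmul_eq_mul, mul_one_div]

lemma sum_card_divisors_div_le (N : ℕ) :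
    ∑ n ∈ Icc 1 N, (#n.divisors : ℝ) / n ≤ (1 + Real.log N) ^ 2 := by
  let g : ArithmeticFunction ℝ := ⟨fun n => 1 / n, by simp⟩
  have g_nonneg (n : ℕ) : 0 ≤ g n := one_div_nonneg.mpr n.cast_nonneg
  calc ∑ n ∈ Icc 1 N, (#n.divisors : ℝ) / n
      = ∑ n ∈ Ioc 0 N, (g * g) n :=
        sum_congr rfl fun n _ => card_divisors_div_eq_sum_divisorsAntidiagonal n
    _ ≤ ∑ p ∈ Ioc 0 N ×ˢ Ioc 0 N, 1 / (p.1 : ℝ) * (1 / p.2) := by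
        rw [ArithmeticFunction.sum_Ioc_mul_eq_sum_prod_filter]
        exact sum_le_sum_of_subset_of_nonneg (filter_subset _ _)
          fun p _ _ => mul_nonneg (g_nonneg p.1) (g_nonneg p.2)
    _ = (∑ n ∈ Icc 1 N, (1 : ℝ) / n) ^ 2 := by
        rw [sq, sum_mul_sum, ← sum_product']; rfl
    _ ≤ (1 + Real.log N) ^ 2 := by
        gcongr
        exact sum_Icc_one_div_le_one_add_log N

lemma norm_add_pow_four_le {E : Type*} [SeminormedAddCommGroup E] (x y : E) :
    ‖x + y‖ ^ 4 ≤ 8 * (‖x‖ ^ 4 + ‖y‖ ^ 4) :=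
  calc ‖x + y‖ ^ 4 ≤ (‖x‖ + ‖y‖) ^ 4 := by gcongr; exact norm_add_le x y
    _ ≤ 2 ^ (4 - 1) * (‖x‖ ^ 4 + ‖y‖ ^ 4) := add_pow_le (norm_nonneg x) (norm_nonneg y) 4
    _ = 8 * (‖x‖ ^ 4 + ‖y‖ ^ 4) := by norm_num

variable {d : ℕ}

/-- The `n`-th coefficient of the square of the Dirichlet polynomial `∑_{k ≤ N} c k k^{-s}`. -/
def squareCoeff (N : ℕ) (c : ℕ → ℂ) (n : ℕ) : ℂ :=
  ∑ p ∈ Icc 1 N ×ˢ Icc 1 N with p.1 * p.2 = n, c p.1 * c p.2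

lemma mul_mem_Icc_of_mem_product {N : ℕ} {p : ℕ × ℕ} (hp : p ∈ Icc 1 N ×ˢ Icc 1 N) :
    p.1 * p.2 ∈ Icc 1 (N * N) := by
  simp only [mem_product, mem_Icc] at hp ⊢
  exact ⟨Nat.mul_pos hp.1.1 hp.2.1, Nat.mul_le_mul hp.1.2 hp.2.2⟩

lemma sum_squareCoeff_mul_eq_sq (N : ℕ) (c : ℕ → ℂ) (χ : DirichletCharacter ℂ d) :
    ∑ n ∈ Icc 1 (N * N), squareCoeff N c n * χ n = (∑ n ∈ Icc 1 N, c n * χ n) ^ 2 := by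
  rw [sq, sum_mul_sum, ← sum_product', ← sum_fiberwise_of_maps_to
    (g := fun p : ℕ × ℕ => p.1 * p.2) fun p => mul_mem_Icc_of_mem_product]
  refine sum_congr rfl fun n _ => ?_
  rw [squareCoeff, sum_mul]
  refine sum_congr rfl fun p hp => ?_
  rw [← (mem_filter.mp hp).2, Nat.cast_mul, map_mul]
  ring

lemma card_product_filter_mul_eq_le {n : ℕ} (hn : n ≠ 0) (s : Finset (ℕ × ℕ)) :
    #{p ∈ s | p.1 * p.2 = n} ≤ #n.divisors := by
  rw [← card_divisorsAntidiagonal]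
  exact card_le_card fun p hp => by simp [(mem_filter.mp hp).2, hn]

lemma norm_sq_squareCoeff_le (N : ℕ) (c : ℕ → ℂ) {n : ℕ} (hn : n ≠ 0) :
    ‖squareCoeff N c n‖ ^ 2 ≤ ∑ p ∈ Icc 1 N ×ˢ Icc 1 N with p.1 * p.2 = n,
      #p.1.divisors * ‖c p.1‖ ^ 2 * (#p.2.divisors * ‖c p.2‖ ^ 2) :=
  calc ‖squareCoeff N c n‖ ^ 2
      ≤ (∑ p ∈ Icc 1 N ×ˢ Icc 1 N with p.1 * p.2 = n, ‖c p.1 * c p.2‖) ^ 2 := by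
        gcongr; exact norm_sum_le _ _
    _ ≤ #{p ∈ Icc 1 N ×ˢ Icc 1 N | p.1 * p.2 = n} *
          ∑ p ∈ Icc 1 N ×ˢ Icc 1 N with p.1 * p.2 = n, ‖c p.1 * c p.2‖ ^ 2 :=
        sq_sum_le_card_mul_sum_sq
    _ ≤ #n.divisors * ∑ p ∈ Icc 1 N ×ˢ Icc 1 N with p.1 * p.2 = n, ‖c p.1 * c p.2‖ ^ 2 := by
        gcongr; exact card_product_filter_mul_eq_le hn _
    _ ≤ _ := by
        rw [mul_sum]
        refine sum_le_sum fun p hp => ?_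
        have : (#n.divisors : ℝ) ≤ #p.1.divisors * #p.2.divisors := by
          rw [← (mem_filter.mp hp).2, Nat.divisors_mul]
          exact mod_cast card_mul_le
        calc #n.divisors * ‖c p.1 * c p.2‖ ^ 2
            ≤ #p.1.divisors * #p.2.divisors * ‖c p.1 * c p.2‖ ^ 2 := by gcongr
          _ = _ := by rw [norm_mul]; ring

variable [NeZero d]

lemma sum_dirichletCharacter_inv_mul (r s : ZMod d) :
    ∑ χ : DirichletCharacter ℂ d, χ⁻¹ r * χ s = 
      if IsUnit r ∧ r = s then (d.totient : ℂ) else 0 := by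
  by_cases hr : IsUnit r
  · simp only [hr, true_and]
    rw [← DirichletCharacter.sum_char_inv_mul_char_eq ℂ hr s]
    obtain ⟨u, rfl⟩ := hr
    simp only [MulChar.inv_apply, Ring.inverse_unit, ZMod.inv_coe_unit]
  · simp [hr, MulChar.map_nonunit _ hr]

lemma sum_norm_sq_sum_mul_dirichletCharacter (b : ZMod d → ℂ) :
    ∑ χ : DirichletCharacter ℂ d, ‖∑ r, b r * χ r‖ ^ 2
      = d.totient * ∑ r with IsUnit r, ‖b r‖ ^ 2 := by
  have expand (χ : DirichletCharacter ℂ d) : ((‖∑ r, b r * χ r‖ : ℂ)) ^ 2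
      = ∑ r, ∑ s, starRingEnd ℂ (b r) * b s * (χ⁻¹ r * χ s) := by
    rw [← Complex.conj_mul', map_sum, sum_mul_sum]
    refine sum_congr rfl fun r _ => sum_congr rfl fun s _ => ?_
    rw [map_mul, ← MulChar.star_apply' χ r, ← starRingEnd_apply]
    ring
  have key : ∑ χ : DirichletCharacter ℂ d, ((‖∑ r, b r * χ r‖ : ℂ)) ^ 2
      = d.totient * ∑ r with IsUnit r, (‖b r‖ : ℂ) ^ 2 := by
    simp_rw [expand]
    rw [sum_comm, mul_sum, sum_filter]
    refine sum_congr rfl fun r _ => ?_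
    rw [sum_comm]
    simp_rw [← mul_sum, sum_dirichletCharacter_inv_mul, ite_and, ← Complex.conj_mul']
    split_ifs <;> simp [mul_comm]
  exact_mod_cast key

lemma sum_norm_sq_sum_mul_dirichletCharacter_le (b : ZMod d → ℂ) :
    ∑ χ : DirichletCharacter ℂ d, ‖∑ r, b r * χ r‖ ^ 2 ≤ d * ∑ r, ‖b r‖ ^ 2 := by
  rw [sum_norm_sq_sum_mul_dirichletCharacter]
  gcongr
  · exact Nat.totient_le d
  · exact filter_subset _ _

lemma sum_Icc_residue_div_le (N : ℕ) (r : ZMod d) :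
    ∑ n ∈ Icc 1 N with ((n : ℕ) : ZMod d) = r, (d : ℝ) / (d + n) ≤ 1 + Real.log (N + 1) := by
  have hd : (0 : ℝ) < d := mod_cast NeZero.pos d
  have injOn_quotient : Set.InjOn (fun n : ℕ => n / d + 1)
      ({n ∈ Icc 1 N | ((n : ℕ) : ZMod d) = r} : Finset ℕ) := by
    intro a ha b hb hab
    simp only [coe_filter, Set.mem_ofPred_eq] at ha hb
    have hmod : a % d = b % d :=
      (ZMod.natCast_eq_natCast_iff' a b d).mp (ha.2.trans hb.2.symm)
    rw [← Nat.div_add_mod a d, ← Nat.div_add_mod b d, hmod, Nat.succ_injective hab]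
  calc ∑ n ∈ Icc 1 N with ((n : ℕ) : ZMod d) = r, (d : ℝ) / (d + n)
      ≤ ∑ n ∈ Icc 1 N with ((n : ℕ) : ZMod d) = r, (1 : ℝ) / (n / d + 1 : ℕ) := by
        refine sum_le_sum fun n _ => ?_
        have : ((n / d : ℕ) : ℝ) * d ≤ n := mod_cast Nat.div_mul_le_self n d
        rw [div_le_div_iff₀ (by positivity) (by positivity)]
        push_cast
        linarith
    _ = ∑ k ∈ ({n ∈ Icc 1 N | ((n : ℕ) : ZMod d) = r}).image (fun n => n / d + 1), (1 : ℝ) / k := by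
        rw [sum_image injOn_quotient]
    _ ≤ ∑ k ∈ Icc 1 (N + 1), (1 : ℝ) / k := by
        refine sum_le_sum_of_subset_of_nonneg (fun k hk => ?_) (by intros; positivity)
        simp only [mem_image, mem_filter, mem_Icc] at hk ⊢
        obtain ⟨n, ⟨hn, _⟩, rfl⟩ := hk
        exact ⟨Nat.succ_pos _, Nat.succ_le_succ ((Nat.div_le_self n d).trans hn.2)⟩
    _ ≤ 1 + Real.log (N + 1) := mod_cast sum_Icc_one_div_le_one_add_log (N + 1)

lemma mul_norm_sq_sum_residue_le (N : ℕ) (a : ℕ → ℂ) (r : ZMod d) :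
    d * ‖∑ n ∈ Icc 1 N with ((n : ℕ) : ZMod d) = r, a n‖ ^ 2 ≤ (1 + Real.log (N + 1)) *
      ∑ n ∈ Icc 1 N with ((n : ℕ) : ZMod d) = r, (d + n : ℝ) * ‖a n‖ ^ 2 := by
  have hd : (0 : ℝ) < d := mod_cast NeZero.pos d
  have cauchy := sum_sq_le_sum_mul_sum_of_sq_le_mul {n ∈ Icc 1 N | ((n : ℕ) : ZMod d) = r}
    (r := fun n => ‖a n‖) (f := fun n => (d : ℝ) / (d + n))
    (g := fun n => (d + n : ℝ) * ‖a n‖ ^ 2 / d)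
    (by intros; positivity) (by intros; positivity) (by intros; apply le_of_eq; field_simp)
  rw [← sum_div, mul_div_assoc', le_div_iff₀' hd] at cauchy
  calc _ ≤ d * (∑ n ∈ Icc 1 N with ((n : ℕ) : ZMod d) = r, ‖a n‖) ^ 2 := by
        gcongr; exact norm_sum_le _ _
    _ ≤ _ := cauchy
    _ ≤ _ := by gcongr; exact sum_Icc_residue_div_le N r

lemma sum_norm_sq_dirichletPolynomial_le (N : ℕ) (a : ℕ → ℂ) :
    ∑ χ : DirichletCharacter ℂ d, ‖∑ n ∈ Icc 1 N, a n * χ n‖ ^ 2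
      ≤ (1 + Real.log (N + 1)) * ∑ n ∈ Icc 1 N, (d + n : ℝ) * ‖a n‖ ^ 2 := by
  have fiber {M : Type} [AddCommMonoid M] (f : ℕ → M) :
      ∑ r : ZMod d, ∑ n ∈ Icc 1 N with ((n : ℕ) : ZMod d) = r, f n = ∑ n ∈ Icc 1 N, f n :=
    sum_fiberwise_of_maps_to (g := fun n : ℕ => (n : ZMod d)) (fun _ _ => mem_univ _) f
  have sum_eq (χ : DirichletCharacter ℂ d) : ∑ n ∈ Icc 1 N, a n * χ n
      = ∑ r, (∑ n ∈ Icc 1 N with ((n : ℕ) : ZMod d) = r, a n) * χ r := by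
    rw [← fiber]
    refine sum_congr rfl fun r _ => ?_
    rw [sum_mul]
    exact sum_congr rfl fun n hn => by rw [(mem_filter.mp hn).2]
  simp_rw [sum_eq]
  refine (sum_norm_sq_sum_mul_dirichletCharacter_le _).trans ?_
  rw [← fiber fun n => (d + n : ℝ) * ‖a n‖ ^ 2, mul_sum, mul_sum]
  exact sum_le_sum fun r _ => mul_norm_sq_sum_residue_le N a r

lemma one_add_log_mul_self_add_one_le (N : ℕ) :
    1 + Real.log ((N * N : ℕ) + 1) ≤ 2 * (1 + Real.log N) := by
  obtain rfl | hN := N.eq_zero_or_pos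
  · simp
  have hN' : (1 : ℝ) ≤ N := mod_cast hN
  have log_two_le : Real.log 2 ≤ 1 := by linarith [Real.log_two_lt_d9]
  calc 1 + Real.log ((N * N : ℕ) + 1) ≤ 1 + Real.log (2 * N ^ 2) := by
        gcongr; push_cast; nlinarith
    _ = 1 + Real.log 2 + 2 * Real.log N := by
        rw [Real.log_mul (by norm_num) (by positivity), Real.log_pow]; push_cast; ring
    _ ≤ 2 * (1 + Real.log N) := by linarith

theorem sum_norm_pow_four_dirichletPolynomial_le (N : ℕ) (c : ℕ → ℂ) :
    ∑ χ : DirichletCharacter ℂ d, ‖∑ n ∈ Icc 1 N, c n * χ n‖ ^ 4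
      ≤ 2 * (1 + Real.log N) * (d * (∑ n ∈ Icc 1 N, #n.divisors * ‖c n‖ ^ 2) ^ 2
          + (∑ n ∈ Icc 1 N, n * (#n.divisors * ‖c n‖ ^ 2)) ^ 2) := by
  have pow_four (χ : DirichletCharacter ℂ d) : ‖∑ n ∈ Icc 1 N, c n * χ n‖ ^ 4
      = ‖∑ n ∈ Icc 1 (N * N), squareCoeff N c n * χ n‖ ^ 2 := by
    rw [sum_squareCoeff_mul_eq_sq, norm_pow, ← pow_mul]
  simp_rw [pow_four]
  refine (sum_norm_sq_dirichletPolynomial_le (N * N) _).trans ?_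
  set D : ℕ → ℝ := fun n => #n.divisors * ‖c n‖ ^ 2
  refine mul_le_mul (one_add_log_mul_self_add_one_le N) ?_ (by positivity)
    (by have := Real.log_natCast_nonneg N; positivity)
  calc ∑ n ∈ Icc 1 (N * N), (d + n : ℝ) * ‖squareCoeff N c n‖ ^ 2
      ≤ ∑ n ∈ Icc 1 (N * N), ∑ p ∈ Icc 1 N ×ˢ Icc 1 N with p.1 * p.2 = n,
          (d + p.1 * p.2 : ℝ) * (D p.1 * D p.2) := by
        refine sum_le_sum fun n hn => ?_
        have hn0 : n ≠ 0 := Nat.one_le_iff_ne_zero.mp (mem_Icc.mp hn).1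
        refine (mul_le_mul_of_nonneg_left (norm_sq_squareCoeff_le N c hn0)
          (by positivity)).trans_eq ?_
        rw [mul_sum]
        refine sum_congr rfl fun p hp => ?_
        rw [← (mem_filter.mp hp).2, Nat.cast_mul]
    _ = ∑ p ∈ Icc 1 N ×ˢ Icc 1 N, (d + p.1 * p.2 : ℝ) * (D p.1 * D p.2) :=
        sum_fiberwise_of_maps_to (g := fun p : ℕ × ℕ => p.1 * p.2)
          (fun p => mul_mem_Icc_of_mem_product) _
    _ = d * (∑ n ∈ Icc 1 N, D n) ^ 2 + (∑ n ∈ Icc 1 N, n * D n) ^ 2 := by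
        rw [sq, sq, sum_mul_sum, sum_mul_sum, ← sum_product', ← sum_product', mul_sum,
          ← sum_add_distrib]
        exact sum_congr rfl fun p _ => by ring

end MeanValues

/-! ### Duality through Gauss sums -/

section Duality

open Finset

variable {d : ℕ} {χ : DirichletCharacter ℂ d}

lemma isPrimitive_inv_dirichletCharacter (hχ : χ.IsPrimitive) : χ⁻¹.IsPrimitive := by
  rwa [DirichletCharacter.IsPrimitive, DirichletCharacter.conductor_inv]

variable [NeZero d]

lemma norm_sq_gaussSum_stdAddChar (hχ : χ.IsPrimitive) :
    ‖gaussSum χ (ZMod.stdAddChar (N := d))‖ ^ 2 = d := by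
  have dft_inv_one : ZMod.dft ⇑(χ⁻¹) 1 = starRingEnd ℂ (gaussSum χ ZMod.stdAddChar) := by
    rw [DirichletCharacter.fourierTransform_eq_gaussSum_mulShift, ← AddChar.inv_mulShift,
      ← star_gaussSum_eq, starRingEnd_apply]
  have dft_dft : ZMod.dft ⇑(χ⁻¹) 1 * gaussSum χ ZMod.stdAddChar = d := by
    have h := congrFun (ZMod.dft_dft χ) (-1)
    rw [funext hχ.fourierTransform_eq_inv_mul_gaussSum, ZMod.dft_mul_const,
      ZMod.dft_comp_neg (Φ := ⇑(χ⁻¹))] at h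
    simpa only [neg_neg, map_one, smul_eq_mul, mul_one] using h
  rw [dft_inv_one, Complex.conj_mul'] at dft_dft
  exact_mod_cast dft_dft

/-- The sum `∑_{n ∈ s} z n e(n r / d)`, the twist by the additive character of frequency `r / d`. -/
noncomputable def additiveTwist (s : Finset ℕ) (z : ℕ → ℂ) (r : ZMod d) : ℂ :=
  ∑ n ∈ s, z n * ZMod.stdAddChar ((n : ZMod d) * r)

lemma gaussSum_inv_mul_sum_eq (hχ : χ.IsPrimitive) (s : Finset ℕ) (z : ℕ → ℂ) :
    gaussSum χ⁻¹ ZMod.stdAddChar * ∑ n ∈ s, z n * χ n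
      = ∑ r : ZMod d, additiveTwist s z r * χ⁻¹ r := by
  have mulShift_eq (n : ZMod d) :
      χ n * gaussSum χ⁻¹ ZMod.stdAddChar = ∑ r, χ⁻¹ r * ZMod.stdAddChar (n * r) := by
    have h := gaussSum_mulShift_of_isPrimitive ZMod.stdAddChar
      (isPrimitive_inv_dirichletCharacter hχ) n
    rw [inv_inv] at h
    exact h.symm.trans (sum_congr rfl fun r _ => by rw [AddChar.mulShift_apply])
  simp_rw [additiveTwist, mul_sum, sum_mul]
  rw [sum_comm]
  refine sum_congr rfl fun n _ => ?_
  rw [mul_left_comm, mul_comm (gaussSum _ _), mulShift_eq, mul_sum]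
  exact sum_congr rfl fun r _ => by ring

lemma sum_zmod_eq_sum_range {M : Type*} [AddCommMonoid M] (f : ZMod d → M) :
    ∑ r, f r = ∑ a ∈ range d, f a :=
  (sum_nbij' (fun a : ℕ => (a : ZMod d)) ZMod.val (by simp) (by simp [ZMod.val_lt])
    (fun a ha => ZMod.val_cast_of_lt (mem_range.mp ha)) (by simp) (by simp)).symm

lemma sum_zmod_eq_zero_add_sum_add_sum_neg {M : Type*} [AddCommMonoid M] (f : ZMod d → M) :
    ∑ r, f r = f 0 + (∑ a ∈ Icc 1 (d / 2), f a + ∑ a ∈ Icc 1 ((d - 1) / 2), f (-a)) := by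
  have hd := NeZero.pos d
  have sum_lower : ∑ a ∈ Icc 1 (d / 2), f a = ∑ a ∈ Ico 1 (d / 2 + 1), f a := rfl
  have sum_upper : ∑ a ∈ Icc 1 ((d - 1) / 2), f (-a) = ∑ a ∈ Ico (d / 2 + 1) d, f a := by
    refine sum_nbij' (d - ·) (d - ·) ?_ ?_ ?_ ?_ fun a ha => ?_
    iterate 4 (simp only [mem_Icc, mem_Ico]; omega)
    rw [mem_Icc] at ha
    simp only [Nat.cast_sub (show a ≤ d by omega), CharP.cast_eq_zero, zero_sub]
  rw [sum_zmod_eq_sum_range, range_eq_Ico, sum_eq_sum_Ico_succ_bot hd, sum_lower, sum_upper]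
  rw [Nat.cast_zero, sum_Ico_consecutive] <;> omega

lemma sq_mul_norm_sum_pow_four_le (hd : 2 ≤ d) (hχ : χ.IsPrimitive) (s : Finset ℕ) (z : ℕ → ℂ) :
    (d : ℝ) ^ 2 * ‖∑ n ∈ s, z n * χ n‖ ^ 4
      ≤ 8 * (‖∑ a ∈ Icc 1 (d / 2), additiveTwist s z (a : ZMod d) * χ⁻¹ a‖ ^ 4
        + ‖∑ a ∈ Icc 1 ((d - 1) / 2), additiveTwist s z (-a : ZMod d) * χ⁻¹ a‖ ^ 4) := by
  have : Fact (1 < d) := ⟨hd⟩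
  have neg_eq (a : ZMod d) : χ⁻¹ (-a) = χ⁻¹ (-1) * χ⁻¹ a := by rw [← map_mul, neg_one_mul]
  have norm_neg_one : ‖χ⁻¹ (-1 : ZMod d)‖ ≤ 1 := DirichletCharacter.norm_le_one χ⁻¹ (-1)
  have dual : gaussSum χ⁻¹ ZMod.stdAddChar * ∑ n ∈ s, z n * χ n
      = ∑ a ∈ Icc 1 (d / 2), additiveTwist s z (a : ZMod d) * χ⁻¹ a
        + χ⁻¹ (-1) * ∑ a ∈ Icc 1 ((d - 1) / 2), additiveTwist s z (-a : ZMod d) * χ⁻¹ a := by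
    rw [gaussSum_inv_mul_sum_eq hχ, sum_zmod_eq_zero_add_sum_add_sum_neg,
      MulChar.map_nonunit _ not_isUnit_zero, mul_zero, zero_add, mul_sum]
    congr 1
    exact sum_congr rfl fun a _ => by rw [neg_eq]; ring
  calc (d : ℝ) ^ 2 * ‖∑ n ∈ s, z n * χ n‖ ^ 4
      = ‖gaussSum χ⁻¹ ZMod.stdAddChar * ∑ n ∈ s, z n * χ n‖ ^ 4 := by
        rw [norm_mul, mul_pow,
          ← norm_sq_gaussSum_stdAddChar (isPrimitive_inv_dirichletCharacter hχ), ← pow_mul]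
    _ ≤ 8 * (_ + ‖χ⁻¹ (-1) * _‖ ^ 4) := by rw [dual]; exact norm_add_pow_four_le _ _
    _ ≤ _ := by
        rw [norm_mul]
        gcongr
        exact mul_le_of_le_one_left (norm_nonneg _) norm_neg_one

end Duality

/-! ### The Kusmin–Landau inequality -/

section KusminLandau

open Finset

lemma exp_ofReal_mul_I_sub (x y : ℝ) :
    cexp (x * I) - cexp (y * I) = (1 - cexp ((y - x : ℝ) * I)) * cexp (x * I) := by
  rw [sub_mul, one_mul, ← Complex.exp_add]
  push_cast
  ring_nf

lemma norm_exp_ofReal_mul_I_sub_le (x y : ℝ) : ‖cexp (x * I) - cexp (y * I)‖ ≤ |x - y| := by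
  rw [exp_ofReal_mul_I_sub, norm_mul, Complex.norm_exp_ofReal_mul_I, mul_one, norm_sub_rev,
    mul_comm _ I, abs_sub_comm]
  exact Real.norm_exp_I_mul_ofReal_sub_one_le

lemma div_five_le_two_mul_sin_half {x : ℝ} (hx0 : 0 ≤ x) (hx : x ≤ 3 * π / 2) :
    x / 5 ≤ 2 * Real.sin (x / 2) := by
  have hpi := Real.pi_lt_d2
  have hpi' := Real.pi_gt_three
  rcases le_total x π with hxp | hxp
  · have hsin := Real.mul_le_sin (x := x / 2) (by positivity) (by linarith)
    have : x / 10 ≤ 2 / π * (x / 2) := by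
      rw [div_mul_div_comm, div_le_div_iff₀ (by positivity) (by positivity)]
      nlinarith
    linarith
  · have hsin := Real.mul_le_sin (x := π - x / 2) (by linarith) (by linarith)
    rw [Real.sin_pi_sub] at hsin
    have : 1 / 2 ≤ 2 / π * (π - x / 2) := by
      rw [div_mul_eq_mul_div, div_le_div_iff₀ (by positivity) (by positivity)]
      linarith
    linarith

lemma abs_div_five_le_norm_one_sub_exp {δ : ℝ} (hδ : |δ| ≤ 3 * π / 2) :
    |δ| / 5 ≤ ‖1 - cexp (δ * I)‖ := by
  have hnorm : ‖1 - cexp (δ * I)‖ = 2 * |Real.sin (|δ| / 2)| := by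
    rw [norm_sub_rev, mul_comm (δ : ℂ) I, Complex.norm_exp_I_mul_ofReal_sub_one, norm_mul,
      Real.norm_two, Real.norm_eq_abs]
    rcases abs_cases δ with h | h
    · rw [h.1]
    · rw [h.1, neg_div, Real.sin_neg, abs_neg]
  rw [hnorm]
  refine (div_five_le_two_mul_sin_half (abs_nonneg δ) hδ).trans ?_
  gcongr
  exact le_abs_self _

lemma sum_range_mul_sub_succ (c e : ℕ → ℂ) (K : ℕ) :
    ∑ k ∈ range (K + 1), c k * (e k - e (k + 1)) =
      c 0 * e 0 - c K * e (K + 1) + ∑ k ∈ range K, (c (k + 1) - c k) * e (k + 1) := by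
  induction K with
  | zero => simp [mul_sub]
  | succ K ih =>
    rw [sum_range_succ, ih, sum_range_succ]
    ring

lemma norm_sum_range_mul_sub_succ_le {c e : ℕ → ℂ} (he : ∀ k, ‖e k‖ ≤ 1) (K : ℕ) :
    ‖∑ k ∈ range (K + 1), c k * (e k - e (k + 1))‖ ≤
      ‖c 0‖ + ‖c K‖ + ∑ k ∈ range K, ‖c (k + 1) - c k‖ := by
  have hmul (z : ℂ) (k : ℕ) : ‖z * e k‖ ≤ ‖z‖ := by
    rw [norm_mul]
    exact mul_le_of_le_one_right (norm_nonneg z) (he k)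
  rw [sum_range_mul_sub_succ]
  refine (norm_add_le _ _).trans (add_le_add ?_ ?_)
  · exact (norm_sub_le _ _).trans (add_le_add (hmul _ _) (hmul _ _))
  · exact (norm_sum_le _ _).trans (sum_le_sum fun k _ => hmul _ _)

lemma sum_range_abs_sub_succ_le {m : ℕ → ℝ} (hm : Antitone m) (hm0 : ∀ k, 0 ≤ m k) (K : ℕ) :
    ∑ k ∈ range K, |m (k + 1) - m k| ≤ m 0 := by
  have habs (k : ℕ) : |m (k + 1) - m k| = m k - m (k + 1) := by
    rw [abs_sub_comm, abs_of_nonneg (sub_nonneg.mpr (hm k.le_succ))]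
  simp_rw [habs, sum_range_sub']
  linarith [hm0 K]

lemma norm_ofReal_mul_inv_sub_le {b b' : ℝ} {u u' : ℂ} {lam : ℝ} (hlam : 0 < lam) (hb' : 0 ≤ b')
    (hbb' : b' ≤ b) (hu : lam ≤ ‖u‖) (hu' : lam ≤ ‖u'‖) :
    ‖b' * u'⁻¹ - b * u⁻¹‖ ≤ (b - b') / lam + b' * ‖u' - u‖ / lam ^ 2 := by
  have hne : u ≠ 0 := norm_pos_iff.mp (hlam.trans_le hu)
  have hne' : u' ≠ 0 := norm_pos_iff.mp (hlam.trans_le hu')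
  have hsplit : b' * u'⁻¹ - b * u⁻¹ = -(((b - b' : ℝ) : ℂ) / u) + b' * (u - u') / (u' * u) := by
    push_cast
    field_simp
    ring
  have hsq : lam ^ 2 ≤ ‖u'‖ * ‖u‖ := by
    rw [sq]
    exact mul_le_mul hu' hu hlam.le (norm_nonneg _)
  rw [hsplit]
  refine (norm_add_le _ _).trans (add_le_add ?_ ?_)
  · rw [norm_neg, norm_div, Complex.norm_of_nonneg (sub_nonneg.mpr hbb')]
    exact div_le_div_of_nonneg_left (sub_nonneg.mpr hbb') hlam hu
  · rw [norm_div, norm_mul, norm_mul, Complex.norm_of_nonneg hb', norm_sub_rev u]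
    exact div_le_div_of_nonneg_left (by positivity) (by positivity) hsq

theorem norm_sum_antitone_mul_exp_le {b φ : ℕ → ℝ} {lam : ℝ} (hb : Antitone b)
    (hb0 : ∀ k, 0 ≤ b k) (hlam : 0 < lam) {K : ℕ}
    (hgap : ∀ k ≤ K, lam ≤ ‖1 - cexp ((φ (k + 1) - φ k : ℝ) * I)‖) :
    ‖∑ k ∈ range (K + 1), b k * cexp (φ k * I)‖ ≤
      b 0 * (2 / lam +
        (∑ k ∈ range K, |(φ (k + 2) - φ (k + 1)) - (φ (k + 1) - φ k)|) / lam ^ 2) := by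
  set u : ℕ → ℂ := fun k => 1 - cexp ((φ (k + 1) - φ k : ℝ) * I)
  have hterm : ∀ k ∈ range (K + 1), b k * cexp (φ k * I) =
      b k * (u k)⁻¹ * (cexp (φ k * I) - cexp (φ (k + 1) * I)) := by
    intro k hk
    have hne : u k ≠ 0 := norm_pos_iff.mp (hlam.trans_le (hgap k (mem_range_succ_iff.mp hk)))
    rw [exp_ofReal_mul_I_sub, mul_assoc, inv_mul_cancel_left₀ hne]
  have hend (k : ℕ) (hk : k ≤ K) : ‖b k * (u k)⁻¹‖ ≤ b k / lam := by
    rw [norm_mul, norm_inv, Complex.norm_of_nonneg (hb0 k), div_eq_mul_inv]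
    exact mul_le_mul_of_nonneg_left (inv_anti₀ hlam (hgap k hk)) (hb0 k)
  have hdiff : ∀ k ∈ range K, ‖b (k + 1) * (u (k + 1))⁻¹ - b k * (u k)⁻¹‖ ≤
      (b k - b (k + 1)) / lam +
        b 0 * |(φ (k + 2) - φ (k + 1)) - (φ (k + 1) - φ k)| / lam ^ 2 := by
    intro k hk
    have hkK := mem_range.mp hk
    refine (norm_ofReal_mul_inv_sub_le hlam (hb0 _) (hb k.le_succ) (hgap k hkK.le)
      (hgap (k + 1) hkK)).trans ?_
    gcongr
    · exact hb0 0
    · exact hb (Nat.zero_le _)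
    · rw [sub_sub_sub_cancel_left, norm_sub_rev]
      exact norm_exp_ofReal_mul_I_sub_le _ _
  rw [sum_congr rfl hterm]
  refine (norm_sum_range_mul_sub_succ_le
    (fun k => (Complex.norm_exp_ofReal_mul_I (φ k)).le) K).trans ?_
  refine (add_le_add (add_le_add (hend 0 K.zero_le) (hend K le_rfl)) (sum_le_sum hdiff)).trans
    (le_of_eq ?_)
  rw [sum_add_distrib, ← sum_div, sum_range_sub', ← sum_div, ← mul_sum]
  ring

/-- Both the tail bound and the correlation bound below are instances of this: there `m` is the
logarithm of a rational function and `s` is `±t`. -/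
lemma norm_sum_antitone_mul_exp_le_of_gap_eq {b φ m : ℕ → ℝ} {β s lam A : ℝ} {K : ℕ}
    (hb : Antitone b) (hb0 : ∀ k, 0 ≤ b k) (hm : Antitone m) (hm0 : ∀ k, 0 ≤ m k)
    (hφ : ∀ k, φ (k + 1) - φ k = β + s * m k) (hlam : 0 < lam) (hA : |s| * m 0 ≤ A * lam)
    (hlower : ∀ k < K, lam ≤ |β + s * m k|) (hupper : ∀ k < K, |β + s * m k| ≤ 3 * π / 2) :
    ‖∑ k ∈ range K, b k * cexp (φ k * I)‖ ≤ b 0 * ((10 + 25 * A) / lam) := by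
  have hA0 : 0 ≤ A := nonneg_of_mul_nonneg_left
    ((mul_nonneg (abs_nonneg s) (hm0 0)).trans hA) hlam
  rcases K with _ | K
  · have := hb0 0
    simp only [range_zero, sum_empty, norm_zero]
    positivity
  have hgap : ∀ k ≤ K, lam / 5 ≤ ‖1 - cexp ((φ (k + 1) - φ k : ℝ) * I)‖ := fun k hk => by
    rw [hφ]
    refine le_trans ?_ (abs_div_five_le_norm_one_sub_exp (hupper k (by omega)))
    linarith [hlower k (by omega)]
  have hvar : ∑ k ∈ range K, |(φ (k + 2) - φ (k + 1)) - (φ (k + 1) - φ k)| ≤ A * lam := by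
    have hterm (k : ℕ) :
        |(φ (k + 2) - φ (k + 1)) - (φ (k + 1) - φ k)| = |s| * |m (k + 1) - m k| := by
      rw [hφ, hφ, ← abs_mul]
      ring_nf
    simp_rw [hterm, ← mul_sum]
    exact (mul_le_mul_of_nonneg_left (sum_range_abs_sub_succ_le hm hm0 K) (abs_nonneg s)).trans hA
  refine (norm_sum_antitone_mul_exp_le hb hb0 (by positivity) hgap).trans
    (mul_le_mul_of_nonneg_left ?_ (hb0 0))
  calc 2 / (lam / 5) + _ / (lam / 5) ^ 2
      ≤ 2 / (lam / 5) + A * lam / (lam / 5) ^ 2 := by gcongr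
    _ = (10 + 25 * A) / lam := by
        field_simp
        ring

end KusminLandau

/-! ### Exponential sums with phase `αn - t log n` -/

section CriticalTerm

open Finset

/-- The number `n ^ (-1/2 - it) * exp (iαn)`: a term of the zeta series on the critical line,
additively twisted. -/
noncomputable def criticalTerm (α t : ℝ) (n : ℕ) : ℂ :=
  ((1 / √(n : ℝ) : ℝ) : ℂ) * cexp ((α * n - t * Real.log n : ℝ) * I)

lemma norm_criticalTerm (α t : ℝ) (n : ℕ) : ‖criticalTerm α t n‖ = 1 / √(n : ℝ) := by
  rw [criticalTerm, norm_mul, Complex.norm_exp_ofReal_mul_I, mul_one,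
    Complex.norm_of_nonneg (by positivity)]

lemma log_add_one_sub_log {x : ℝ} (hx : 0 < x) :
    Real.log (x + 1) - Real.log x = Real.log (1 + 1 / x) := by
  rw [← Real.log_div (by positivity) hx.ne', add_div, div_self hx.ne']

lemma log_one_add_one_div_le {x : ℝ} (hx : 0 < x) : Real.log (1 + 1 / x) ≤ 1 / x :=
  (Real.log_le_sub_one_of_pos (by positivity)).trans (by linarith)

lemma norm_sum_Ico_criticalTerm_tail_le {α t : ℝ} {M R : ℕ} (hM : 1 ≤ M) (hα0 : 0 < |α|)
    (hα : |α| ≤ π) (ht : 2 * |t| ≤ M * |α|) :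
    ‖∑ n ∈ Ico M R, criticalTerm α t n‖ ≤ 70 / (√(M : ℝ) * |α|) := by
  set m : ℕ → ℝ := fun k => Real.log (1 + 1 / (M + k : ℝ))
  have hm0 (k : ℕ) : 0 ≤ m k := Real.log_nonneg (le_add_of_nonneg_right (by positivity))
  have hmanti : Antitone m := fun i j hij => Real.log_le_log (by positivity) (by gcongr)
  have htm (k : ℕ) : |t| * m k ≤ |α| / 2 := by
    refine (mul_le_mul_of_nonneg_left (log_one_add_one_div_le (by positivity))
      (abs_nonneg t)).trans ?_
    rw [mul_one_div, div_le_div_iff₀ (by positivity) two_pos]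
    nlinarith [mul_nonneg k.cast_nonneg hα0.le]
  have habs (k : ℕ) : |-t * m k| = |t| * m k := by
    rw [abs_mul, abs_neg, abs_of_nonneg (hm0 k)]
  have hlower (k : ℕ) : |α| / 2 ≤ |α + -t * m k| := by
    have := abs_sub_abs_le_abs_sub α (-(-t * m k))
    rw [abs_neg, sub_neg_eq_add, habs] at this
    linarith [htm k]
  have hupper (k : ℕ) : |α + -t * m k| ≤ 3 * π / 2 :=
    (abs_add_le _ _).trans (by linarith [htm k, habs k])
  set φ : ℕ → ℝ := fun k => α * (M + k : ℕ) - t * Real.log (M + k : ℕ)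
  have hstep (k : ℕ) : φ (k + 1) - φ k = α + -t * m k := by
    simp only [φ, m, ← log_add_one_sub_log (show (0 : ℝ) < M + k by positivity)]
    push_cast
    ring_nf
  have hanti : Antitone fun k : ℕ => 1 / √((M + k : ℕ) : ℝ) := fun i j hij => by
    have : (0 : ℝ) < √((M + i : ℕ) : ℝ) := by positivity
    dsimp only
    gcongr
  rw [sum_Ico_eq_sum_range]
  refine (norm_sum_antitone_mul_exp_le_of_gap_eq (K := R - M) (φ := φ) (A := 1) hanti
    (fun k => by positivity) hmanti hm0 hstep (half_pos hα0) (by simpa using htm 0)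
    (fun k _ => hlower k) (fun k _ => hupper k)).trans (le_of_eq ?_)
  rw [add_zero]
  field_simp
  norm_num

lemma criticalTerm_add_mul_conj (α t : ℝ) (n k : ℕ) :
    criticalTerm α t (n + k) * starRingEnd ℂ (criticalTerm α t n) =
      ((1 / √(n + k : ℝ) * (1 / √(n : ℝ)) : ℝ) : ℂ) *
        cexp ((α * k - t * (Real.log (n + k) - Real.log n) : ℝ) * I) := by
  rw [criticalTerm, criticalTerm, map_mul, conj_ofReal, ← Complex.exp_conj, map_mul, conj_ofReal,
    conj_I, mul_mul_mul_comm, ← Complex.exp_add]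
  push_cast
  ring_nf

/-- The second difference of `log` that governs the phase of the correlation with shift `k`. -/
noncomputable def logCrossRatio (k x : ℝ) : ℝ :=
  Real.log (1 + k / (x * (x + 1 + k)))

lemma logCrossRatio_eq {k x : ℝ} (hk : 0 ≤ k) (hx : 0 < x) :
    logCrossRatio k x =
      Real.log (x + 1) + Real.log (x + k) - (Real.log x + Real.log (x + 1 + k)) := by
  rw [logCrossRatio, ← Real.log_mul (by positivity) (by positivity),
    ← Real.log_mul (by positivity) (by positivity), ← Real.log_div (by positivity) (by positivity)]
  congr 1
  field_simp
  ring

lemma logCrossRatio_nonneg {k x : ℝ} (hk : 0 ≤ k) (hx : 0 < x) : 0 ≤ logCrossRatio k x :=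
  Real.log_nonneg (le_add_of_nonneg_right (by positivity))

lemma logCrossRatio_anti {k x y : ℝ} (hk : 0 ≤ k) (hx : 0 < x) (hxy : x ≤ y) :
    logCrossRatio k y ≤ logCrossRatio k x := by
  have := hx.trans_le hxy
  exact Real.log_le_log (by positivity) (by gcongr)

lemma logCrossRatio_le {k x : ℝ} (hk : 0 ≤ k) (hx : 0 < x) : logCrossRatio k x ≤ k / x ^ 2 := by
  have hlog := Real.log_le_sub_one_of_pos (x := 1 + k / (x * (x + 1 + k))) (by positivity)
  have : k / (x * (x + 1 + k)) ≤ k / x ^ 2 :=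
    div_le_div_of_nonneg_left hk (by positivity) (by nlinarith)
  rw [logCrossRatio]
  linarith

lemma le_logCrossRatio {k x : ℝ} (hk : 0 ≤ k) (hx : 0 < x) :
    k / ((x + 1) * (x + k)) ≤ logCrossRatio k x := by
  have hlog := Real.one_sub_inv_le_log_of_pos (x := 1 + k / (x * (x + 1 + k))) (by positivity)
  have heq : 1 + k / (x * (x + 1 + k)) = (x + 1) * (x + k) / (x * (x + 1 + k)) := by
    field_simp
    ring
  have hinv : 1 - (1 + k / (x * (x + 1 + k)))⁻¹ = k / ((x + 1) * (x + k)) := by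
    rw [heq, inv_div]
    field_simp
    ring
  exact hinv ▸ hlog

lemma div_six_mul_sq_le_logCrossRatio {k x y : ℝ} (hk : 0 ≤ k) (hkx : k ≤ x) (hx : 0 < x)
    (hxy : x ≤ y) (hyx : y + 1 ≤ 2 * x) : k / (6 * x ^ 2) ≤ logCrossRatio k y := by
  have hy : 0 < y := hx.trans_le hxy
  refine le_trans ?_ (le_logCrossRatio hk hy)
  refine div_le_div_of_nonneg_left hk (by positivity) ?_
  calc (y + 1) * (y + k) ≤ (2 * x) * (3 * x) := by gcongr; linarith
    _ = 6 * x ^ 2 := by ring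

lemma antitone_one_div_sqrt_add_mul_one_div_sqrt {x k : ℝ} (hx : 0 < x) (hk : 0 ≤ k) :
    Antitone fun j : ℕ => 1 / √(x + j + k) * (1 / √(x + j)) := fun i j hij => by
  have : 0 < √(x + i) := by positivity
  have : 0 < √(x + i + k) := by positivity
  dsimp only
  gcongr

lemma one_div_sqrt_add_mul_one_div_sqrt_le {x k : ℝ} (hx : 0 < x) (hk : 0 ≤ k) :
    1 / √(x + k) * (1 / √x) ≤ 1 / x := by
  rw [one_div_mul_one_div]
  refine one_div_le_one_div_of_le hx ?_
  calc x = √x * √x := (Real.mul_self_sqrt hx.le).symm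
    _ ≤ √(x + k) * √x := by gcongr; linarith

lemma norm_sum_Ico_criticalTerm_add_mul_conj_le {α t : ℝ} {N L k : ℕ} (hN : 1 ≤ N) (hk : 1 ≤ k)
    (hkN : k ≤ N) (hL : L ≤ 2 * N) (ht0 : 0 < |t|) (ht : |t| * k ≤ (N : ℝ) ^ 2) :
    ‖∑ n ∈ Ico N L, criticalTerm α t (n + k) * starRingEnd ℂ (criticalTerm α t n)‖ ≤
      960 * N / (|t| * k) := by
  have hNpos : (0 : ℝ) < N := by exact_mod_cast hN
  have hkpos : (0 : ℝ) < k := by exact_mod_cast hk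
  have hkN' : (k : ℝ) ≤ N := by exact_mod_cast hkN
  set m : ℕ → ℝ := fun j => logCrossRatio k (N + j)
  have hm0 (j : ℕ) : 0 ≤ m j := logCrossRatio_nonneg hkpos.le (by positivity)
  have hmanti : Antitone m := fun i j hij =>
    logCrossRatio_anti hkpos.le (by positivity) (by gcongr)
  have hmt : |t| * m 0 ≤ 6 * (|t| * (k / (6 * (N : ℝ) ^ 2))) := by
    have hm_le : m 0 ≤ k / (N : ℝ) ^ 2 := by simpa [m] using logCrossRatio_le hkpos.le hNpos
    refine (mul_le_mul_of_nonneg_left hm_le ht0.le).trans (le_of_eq ?_)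
    field_simp
  have hm_ge (j : ℕ) (hj : j < L - N) : k / (6 * (N : ℝ) ^ 2) ≤ m j := by
    have hj' : (N : ℝ) + j + 1 ≤ 2 * N := by exact_mod_cast (by omega : N + j + 1 ≤ 2 * N)
    exact div_six_mul_sq_le_logCrossRatio hkpos.le hkN' hNpos (by simp) hj'
  have habs (j : ℕ) : |0 + t * m j| = |t| * m j := by
    rw [zero_add, abs_mul, abs_of_nonneg (hm0 j)]
  have hupper (j : ℕ) : |0 + t * m j| ≤ 3 * π / 2 := by
    have h1 : 6 * (|t| * (k / (6 * (N : ℝ) ^ 2))) ≤ 1 := by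
      field_simp
      exact ht
    rw [habs]
    have := mul_le_mul_of_nonneg_left (hmanti j.zero_le) ht0.le
    linarith [Real.pi_gt_three]
  set φ : ℕ → ℝ := fun j => α * k - t * (Real.log (N + j + k) - Real.log (N + j))
  have hstep (j : ℕ) : φ (j + 1) - φ j = 0 + t * m j := by
    simp only [m, φ, logCrossRatio_eq hkpos.le (show (0 : ℝ) < N + j by positivity)]
    push_cast
    ring_nf
  simp_rw [criticalTerm_add_mul_conj, sum_Ico_eq_sum_range, Nat.cast_add]
  refine (norm_sum_antitone_mul_exp_le_of_gap_eq (φ := φ)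
    (antitone_one_div_sqrt_add_mul_one_div_sqrt hNpos hkpos.le) (fun j => by positivity)
    hmanti hm0 hstep (by positivity) hmt
    (fun j hj => by rw [habs]; exact mul_le_mul_of_nonneg_left (hm_ge j hj) ht0.le)
    (fun j _ => hupper j)).trans ?_
  rw [Nat.cast_zero, add_zero]
  refine (mul_le_mul_of_nonneg_right (one_div_sqrt_add_mul_one_div_sqrt_le hNpos hkpos.le)
    (by positivity)).trans (le_of_eq ?_)
  field_simp
  norm_num

end CriticalTerm

/-! ### The van der Corput inequality -/

section VanDerCorput

open Finset

/-- The correlation with shift `k` of the restriction of `z` to the interval `[N, L)`. -/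
noncomputable def autocorrelation (z : ℕ → ℂ) (N L k : ℕ) : ℂ :=
  ∑ n ∈ Ico N (L - k), z (n + k) * starRingEnd ℂ (z n)

lemma sum_Ico_sub_add_eq_sum_Ico {M : Type*} [AddCommMonoid M] {w : ℕ → M} {N L H h : ℕ}
    (hw : ∀ n ∉ Ico N L, w n = 0) (hh : h ≤ H) (hH : H ≤ N) :
    ∑ m ∈ Ico (N - H) L, w (m + h) = ∑ n ∈ Ico N L, w n := by
  rw [sum_Ico_add' w (N - H) L h]
  exact (sum_subset (Ico_subset_Ico (by omega) (by omega)) fun n _ hn => hw n hn).symm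

lemma sum_norm_sq_sum_le {ι κ : Type*} (s : Finset ι) (t : Finset κ) (a : ι → κ → ℂ) :
    ∑ i ∈ s, ‖∑ j ∈ t, a i j‖ ^ 2 ≤
      ∑ j ∈ t, ∑ j' ∈ t, ‖∑ i ∈ s, a i j * starRingEnd ℂ (a i j')‖ := by
  have hexpand : ((∑ i ∈ s, ‖∑ j ∈ t, a i j‖ ^ 2 : ℝ) : ℂ) =
      ∑ j ∈ t, ∑ j' ∈ t, ∑ i ∈ s, a i j * starRingEnd ℂ (a i j') := by
    push_cast
    simp_rw [← Complex.mul_conj', map_sum, sum_mul_sum]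
    rw [sum_comm]
    exact sum_congr rfl fun j _ => sum_comm
  rw [← Complex.norm_of_nonneg (sum_nonneg fun i _ => by positivity), hexpand]
  exact (norm_sum_le _ _).trans (sum_le_sum fun j _ => norm_sum_le _ _)

lemma sum_filter_le_sum_range_of_injOn {B : ℕ → ℝ} (hB : ∀ k, 0 ≤ B k) {H : ℕ} {f : ℕ → ℕ}
    {p : ℕ → Prop} [DecidablePred p] (hf : ∀ j < H, p j → f j < H)
    (hinj : Set.InjOn f {j | j < H ∧ p j}) :
    ∑ j ∈ range H with p j, B (f j) ≤ ∑ k ∈ range H, B k := by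
  rw [← sum_image (f := B) (g := f) fun i hi j hj => by
    simp only [coe_filter, mem_range] at hi hj
    exact hinj hi hj]
  refine sum_le_sum_of_subset_of_nonneg (fun k hk => ?_) fun k _ _ => hB k
  obtain ⟨j, hj, rfl⟩ := mem_image.mp hk
  rw [mem_filter, mem_range] at hj
  exact mem_range.mpr (hf j hj.1 hj.2)

lemma sum_range_comp_dist_le {B : ℕ → ℝ} (hB : ∀ k, 0 ≤ B k) {h H : ℕ} (hh : h < H) :
    ∑ j ∈ range H, B (h.dist j) ≤ 2 * ∑ k ∈ range H, B k := by
  rw [← sum_filter_add_sum_filter_not (range H) (· ≤ h), two_mul]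
  refine add_le_add
    (sum_filter_le_sum_range_of_injOn hB (fun j _ _ => ?_) fun i hi j hj hij => ?_)
    (sum_filter_le_sum_range_of_injOn hB (fun j _ _ => ?_) fun i hi j hj hij => ?_)
  all_goals
    simp only [Nat.dist, Set.mem_ofPred_eq] at *
    omega

lemma sum_shift_mul_conj_eq {z : ℕ → ℂ} {N L H h k : ℕ} (hz : ∀ n ∉ Ico N L, z n = 0)
    (hh : h ≤ H) (hH : H ≤ N) :
    ∑ m ∈ Ico (N - H) L, z (m + h + k) * starRingEnd ℂ (z (m + h)) = autocorrelation z N L k := by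
  have hshift := sum_Ico_sub_add_eq_sum_Ico (w := fun n => z (n + k) * starRingEnd ℂ (z n))
    (fun n hn => by rw [hz n hn, map_zero, mul_zero]) hh hH
  rw [hshift, autocorrelation]
  refine (sum_subset (Ico_subset_Ico le_rfl (by omega)) fun n hn hn' => ?_).symm
  rw [mem_Ico] at hn hn'
  rw [hz (n + k) (by rw [mem_Ico]; omega), zero_mul]

lemma norm_sum_shift_mul_conj_shift_eq {z : ℕ → ℂ} {N L H h h' : ℕ}
    (hz : ∀ n ∉ Ico N L, z n = 0) (hh : h ≤ H) (hh' : h' ≤ H) (hH : H ≤ N) :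
    ‖∑ m ∈ Ico (N - H) L, z (m + h) * starRingEnd ℂ (z (m + h'))‖ =
      ‖autocorrelation z N L (h.dist h')‖ := by
  rcases le_total h' h with hle | hle
  · obtain ⟨k, rfl⟩ := Nat.exists_eq_add_of_le hle
    rw [Nat.dist_eq_sub_of_le_right hle, Nat.add_sub_cancel_left,
      ← sum_shift_mul_conj_eq hz hh' hH]
    simp_rw [add_assoc]
  · obtain ⟨k, rfl⟩ := Nat.exists_eq_add_of_le hle
    rw [Nat.dist_eq_sub_of_le hle, Nat.add_sub_cancel_left, ← sum_shift_mul_conj_eq hz hh hH,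
      ← Complex.norm_conj, map_sum]
    simp_rw [map_mul, Complex.conj_conj, mul_comm, add_assoc]

lemma autocorrelation_congr {z w : ℕ → ℂ} {N L : ℕ} (h : ∀ n ∈ Ico N L, z n = w n) (k : ℕ) :
    autocorrelation z N L k = autocorrelation w N L k :=
  sum_congr rfl fun n hn => by
    rw [mem_Ico] at hn
    rw [h n (by rw [mem_Ico]; omega), h (n + k) (by rw [mem_Ico]; omega)]

theorem mul_norm_sq_sum_Ico_le_autocorrelation (z : ℕ → ℂ) {N L H : ℕ} (hH : H ≤ N) :
    (H : ℝ) * ‖∑ n ∈ Ico N L, z n‖ ^ 2 ≤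
      (L - (N - H) : ℕ) * (2 * ∑ k ∈ range H, ‖autocorrelation z N L k‖) := by
  rcases Nat.eq_zero_or_pos H with rfl | hHpos
  · simp
  set w : ℕ → ℂ := fun n => if n ∈ Ico N L then z n else 0
  have hw : ∀ n ∉ Ico N L, w n = 0 := fun n hn => if_neg hn
  have hwz : ∀ n ∈ Ico N L, w n = z n := fun n hn => if_pos hn
  simp_rw [← sum_congr rfl hwz, ← autocorrelation_congr hwz]
  set S := ∑ n ∈ Ico N L, w n
  have hcount : (H : ℂ) * S = ∑ m ∈ Ico (N - H) L, ∑ h ∈ range H, w (m + h) := by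
    rw [sum_comm, sum_congr rfl fun h hh =>
      sum_Ico_sub_add_eq_sum_Ico hw (mem_range.mp hh).le hH, sum_const, card_range, nsmul_eq_mul]
  have hcorr : ∑ m ∈ Ico (N - H) L, ‖∑ h ∈ range H, w (m + h)‖ ^ 2 ≤
      H * (2 * ∑ k ∈ range H, ‖autocorrelation w N L k‖) := by
    refine (sum_norm_sq_sum_le _ _ _).trans ?_
    rw [← nsmul_eq_mul, ← card_range H, ← sum_const, card_range]
    refine sum_le_sum fun h hh => ?_
    refine (sum_congr rfl fun h' hh' => ?_).trans_le
      (sum_range_comp_dist_le (fun k => norm_nonneg (autocorrelation w N L k)) (mem_range.mp hh))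
    exact norm_sum_shift_mul_conj_shift_eq hw (mem_range.mp hh).le (mem_range.mp hh').le hH
  have hHr : (0 : ℝ) < H := by exact_mod_cast hHpos
  refine le_of_mul_le_mul_left ?_ hHr
  calc (H : ℝ) * (H * ‖S‖ ^ 2) = ‖(H : ℂ) * S‖ ^ 2 := by
        rw [norm_mul, Complex.norm_natCast]
        ring
    _ ≤ (∑ m ∈ Ico (N - H) L, ‖∑ h ∈ range H, w (m + h)‖) ^ 2 := by
        rw [hcount]
        gcongr
        exact norm_sum_le _ _
    _ ≤ (L - (N - H) : ℕ) * ∑ m ∈ Ico (N - H) L, ‖∑ h ∈ range H, w (m + h)‖ ^ 2 := by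
        rw [← Nat.card_Ico (N - H) L]
        exact sq_sum_le_card_mul_sum_sq
    _ ≤ (L - (N - H) : ℕ) * (H * (2 * ∑ k ∈ range H, ‖autocorrelation w N L k‖)) := by gcongr
    _ = H * ((L - (N - H) : ℕ) * (2 * ∑ k ∈ range H, ‖autocorrelation w N L k‖)) := by ring

end VanDerCorput

/-! ### Bounds for the critical exponential sums -/

section CriticalSums

open Finset

lemma norm_sum_Ico_criticalTerm_le_sqrt (α t : ℝ) {N L : ℕ} (hN : 1 ≤ N) (hL : L ≤ 2 * N) :
    ‖∑ n ∈ Ico N L, criticalTerm α t n‖ ≤ √(N : ℝ) := by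
  have hNpos : (0 : ℝ) < N := by exact_mod_cast hN
  have hcard : ((L - N : ℕ) : ℝ) ≤ N := by exact_mod_cast (by omega : L - N ≤ N)
  have hterm : ∀ n ∈ Ico N L, ‖criticalTerm α t n‖ ≤ 1 / √(N : ℝ) := fun n hn => by
    rw [norm_criticalTerm]
    gcongr
    exact (mem_Ico.mp hn).1
  refine (norm_sum_le_of_le _ hterm).trans ?_
  rw [sum_const, Nat.card_Ico, nsmul_eq_mul, mul_one_div, div_le_iff₀ (by positivity),
    Real.mul_self_sqrt hNpos.le]
  exact hcard

lemma norm_autocorrelation_criticalTerm_zero_le (α t : ℝ) {N L : ℕ} (hN : 1 ≤ N)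
    (hL : L ≤ 2 * N) : ‖autocorrelation (criticalTerm α t) N L 0‖ ≤ 1 := by
  have hNpos : (0 : ℝ) < N := by exact_mod_cast hN
  have hcard : ((L - N : ℕ) : ℝ) ≤ N := by exact_mod_cast (by omega : L - N ≤ N)
  have hterm : ∀ n ∈ Ico N (L - 0),
      ‖criticalTerm α t (n + 0) * starRingEnd ℂ (criticalTerm α t n)‖ ≤ 1 / N := fun n hn => by
    rw [add_zero, norm_mul, Complex.norm_conj, norm_criticalTerm, div_mul_div_comm,
      Real.mul_self_sqrt (by positivity), one_mul]
    gcongr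
    exact (mem_Ico.mp hn).1
  refine (norm_sum_le_of_le _ hterm).trans ?_
  rw [sum_const, Nat.card_Ico, nsmul_eq_mul, mul_one_div, div_le_one hNpos]
  exact hcard

lemma sum_norm_autocorrelation_criticalTerm_le {α t : ℝ} {N L H : ℕ} (hN : 1 ≤ N)
    (hL : L ≤ 2 * N) (hH : H ≤ N) (ht0 : 0 < |t|) (ht : ∀ k < H, |t| * k ≤ (N : ℝ) ^ 2) :
    ∑ k ∈ range H, ‖autocorrelation (criticalTerm α t) N L k‖ ≤
      1 + 960 * (N / |t|) * (1 + Real.log N) := by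
  rcases Nat.eq_zero_or_pos H with rfl | hHpos
  · simp only [range_zero, sum_empty]
    positivity
  have hterm : ∀ k ∈ Ico 1 H, ‖autocorrelation (criticalTerm α t) N L k‖ ≤
      960 * (N / |t|) * (1 / k) := fun k hk => by
    rw [mem_Ico] at hk
    refine (norm_sum_Ico_criticalTerm_add_mul_conj_le hN hk.1 (by omega) (by omega) ht0
      (ht k hk.2)).trans (le_of_eq ?_)
    field_simp
  rw [range_eq_Ico, sum_eq_sum_Ico_succ_bot hHpos]
  refine add_le_add (norm_autocorrelation_criticalTerm_zero_le α t hN hL)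
    ((sum_le_sum hterm).trans ?_)
  rw [← mul_sum]
  gcongr
  refine le_trans (sum_le_sum_of_subset_of_nonneg (fun k hk => ?_) fun k _ _ => by positivity)
    (sum_Icc_one_div_le_one_add_log N)
  rw [mem_Ico] at hk
  rw [mem_Icc]
  omega

lemma one_add_mul_one_add_inv_le {x : ℝ} (hx : 0 < x) :
    (1 + x) * (1 + x⁻¹) ≤ 2 * (x + x⁻¹) := by
  have h : 2 * (x + x⁻¹) - (1 + x) * (1 + x⁻¹) = (x - 1) ^ 2 * x⁻¹ := by
    field_simp
    ring
  have : 0 ≤ (x - 1) ^ 2 * x⁻¹ := by positivity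
  linarith

lemma natCast_le_one_add_mul_ceil_min {T : ℝ} (hT : 0 < T) (N : ℕ) :
    (N : ℝ) ≤ (1 + T / N) * ⌈min (N : ℝ) ((N : ℝ) ^ 2 / T)⌉₊ := by
  rcases Nat.eq_zero_or_pos N with rfl | hN
  · simp only [Nat.cast_zero]
    positivity
  refine le_trans ?_ (mul_le_mul_of_nonneg_left (Nat.le_ceil _) (by positivity))
  rcases min_cases (N : ℝ) ((N : ℝ) ^ 2 / T) with h | h <;> rw [h.1, add_mul, one_mul]
  · exact le_add_of_nonneg_right (by positivity)
  · have : T / N * ((N : ℝ) ^ 2 / T) = N := by field_simp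
    rw [this]
    exact le_add_of_nonneg_left (by positivity)

/-- The van der Corput inequality with shifts up to `min N (N ^ 2 / |t|)`, the range in which the
correlations are controlled by the Kusmin–Landau inequality. -/
lemma norm_sq_sum_Ico_two_mul_criticalTerm_le_of_one_le {α t : ℝ} {N L : ℕ} (hN : 1 ≤ N)
    (hL : L ≤ 2 * N) (ht : 1 ≤ |t|) :
    ‖∑ n ∈ Ico N L, criticalTerm α t n‖ ^ 2 ≤
      7680 * (1 + Real.log N) * (|t| / N + (|t| / N)⁻¹) := by
  have hNpos : (0 : ℝ) < N := by exact_mod_cast hN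
  have hlog := Real.log_natCast_nonneg N
  have htpos : 0 < |t| := by linarith
  set H : ℕ := ⌈min (N : ℝ) ((N : ℝ) ^ 2 / |t|)⌉₊
  have hHN : H ≤ N := Nat.ceil_le.mpr (min_le_left _ _)
  have hHpos : (0 : ℝ) < H := Nat.cast_pos.mpr (Nat.ceil_pos.mpr (lt_min hNpos (by positivity)))
  have hcorr := sum_norm_autocorrelation_criticalTerm_le (α := α) hN hL hHN htpos fun k hk => by
    have := ((Nat.lt_ceil.mp hk).trans_le (min_le_right _ _)).le
    rwa [le_div_iff₀ htpos, mul_comm] at this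
  have hNH : (N : ℝ) ≤ (1 + |t| / N) * H := natCast_le_one_add_mul_ceil_min htpos N
  set x := |t| / N with hx
  have hxpos : 0 < x := by positivity
  have hlen : ((L - (N - H) : ℕ) : ℝ) ≤ 2 * ((1 + x) * H) := by
    have : ((L - (N - H) : ℕ) : ℝ) ≤ 2 * N := by exact_mod_cast (by omega : _ ≤ 2 * N)
    linarith
  have hvdc := mul_norm_sq_sum_Ico_le_autocorrelation (criticalTerm α t) (L := L) hHN
  set Λ := 1 + Real.log N
  refine le_of_mul_le_mul_left (hvdc.trans ?_) hHpos
  calc _ ≤ 2 * ((1 + x) * H) * (2 * (1 + 960 * (N / |t|) * Λ)) := by gcongr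
    _ = H * (4 * ((1 + x) * (1 + 960 * x⁻¹ * Λ))) := by rw [hx, inv_div]; ring
    _ ≤ H * (4 * ((1 + x) * (960 * Λ * (1 + x⁻¹)))) := by
        gcongr
        linarith
    _ = H * (3840 * Λ) * ((1 + x) * (1 + x⁻¹)) := by ring
    _ ≤ H * (3840 * Λ) * (2 * (x + x⁻¹)) :=
        mul_le_mul_of_nonneg_left (one_add_mul_one_add_inv_le hxpos) (by positivity)
    _ = H * (7680 * Λ * (x + x⁻¹)) := by ring

lemma norm_sq_sum_Ico_two_mul_criticalTerm_le {α t : ℝ} {N L : ℕ} (hN : 1 ≤ N)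
    (hL : L ≤ 2 * N) :
    ‖∑ n ∈ Ico N L, criticalTerm α t n‖ ^ 2 ≤
      15360 * (1 + Real.log N) * ((1 + |t|) / N + N / (1 + |t|)) := by
  have hNpos : (0 : ℝ) < N := by exact_mod_cast hN
  have hlog := Real.log_natCast_nonneg N
  rcases le_total |t| 1 with ht | ht
  · have htriv := norm_sum_Ico_criticalTerm_le_sqrt α t hN hL
    have hN2 : (N : ℝ) ≤ 2 * (N / (1 + |t|)) := by
      rw [mul_div_assoc', le_div_iff₀ (by positivity)]
      nlinarith
    have : 0 ≤ (1 + |t|) / N := by positivity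
    calc ‖∑ n ∈ Ico N L, criticalTerm α t n‖ ^ 2 ≤ √(N : ℝ) ^ 2 := by gcongr
      _ = (N : ℝ) := Real.sq_sqrt hNpos.le
      _ ≤ 15360 * 1 * ((1 + |t|) / N + N / (1 + |t|)) := by linarith
      _ ≤ _ := by
          gcongr
          linarith
  · have htpos : 0 < |t| := by linarith
    have hinv : (|t| / N)⁻¹ ≤ 2 * (N / (1 + |t|)) := by
      rw [inv_div, mul_div_assoc', div_le_div_iff₀ htpos (by positivity)]
      nlinarith
    have hle : |t| / N ≤ 2 * ((1 + |t|) / N) := by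
      rw [mul_div_assoc']
      gcongr
      linarith
    refine (norm_sq_sum_Ico_two_mul_criticalTerm_le_of_one_le hN hL ht).trans ?_
    calc _ ≤ 7680 * (1 + Real.log N) * (2 * ((1 + |t|) / N) + 2 * (N / (1 + |t|))) := by gcongr
      _ = _ := by ring

/-- Bounds on dyadic blocks sum like geometric series, increasing in one term and decreasing in the
other. -/
lemma norm_sum_Ico_le_of_dyadic {z : ℕ → ℂ} {A B : ℝ} {R : ℕ} (hA : 0 ≤ A) (hB : 0 ≤ B)
    (hz : ∀ M L : ℕ, 1 ≤ M → M ≤ R → L ≤ 2 * M → ‖∑ n ∈ Ico M L, z n‖ ≤ A / √M + B * √M)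
    {N : ℕ} (hN : 1 ≤ N) (hNR : N ≤ R) :
    ‖∑ n ∈ Ico N R, z n‖ ≤ 4 * (A / √N) + 8 * (B * √R) - 4 * (B * √N) := by
  have hNpos : (0 : ℝ) < N := by exact_mod_cast hN
  have hApos : 0 ≤ A / √N := by positivity
  have hmono : B * √N ≤ B * √R := by gcongr
  have hBpos : 0 ≤ B * √N := by positivity
  rcases le_or_gt R (2 * N) with hR | hR
  · have := hz N R hN hNR hR
    linarith
  · have hblock := hz N (2 * N) hN hNR le_rfl
    have hrest := norm_sum_Ico_le_of_dyadic hA hB hz (N := 2 * N) (by omega) hR.le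
    rw [← sum_Ico_consecutive _ (show N ≤ 2 * N by omega) hR.le]
    have hsqrt : 1.4 * √(N : ℝ) ≤ √((2 * N : ℕ) : ℝ) := by
      rw [show (1.4 : ℝ) = √(1.4 ^ 2) by rw [Real.sqrt_sq (by norm_num)],
        ← Real.sqrt_mul (by positivity)]
      apply Real.sqrt_le_sqrt
      push_cast
      linarith
    have hA' : A / √((2 * N : ℕ) : ℝ) ≤ 0.75 * (A / √N) := by
      rw [mul_div_assoc', div_le_div_iff₀ (by positivity) (by positivity)]
      nlinarith [mul_le_mul_of_nonneg_left hsqrt hA, mul_nonneg hA (Real.sqrt_nonneg (N : ℝ))]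
    have hB' := mul_le_mul_of_nonneg_left hsqrt hB
    refine (norm_add_le _ _).trans ?_
    linarith
termination_by R - N

lemma norm_sq_sum_Ico_criticalTerm_le (α t : ℝ) {N L R : ℕ} (hN : 1 ≤ N) (hLR : L ≤ R) :
    ‖∑ n ∈ Ico N L, criticalTerm α t n‖ ^ 2 ≤
      2000000 * (1 + Real.log R) * ((1 + |t|) / N + L / (1 + |t|)) := by
  set T := 1 + |t|
  rcases le_or_gt L N with hLN | hNL
  · rw [Ico_eq_empty (by omega), sum_empty, norm_zero, zero_pow two_ne_zero]
    positivity
  set c := 15360 * (1 + Real.log R) with hc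
  have hblock (M K : ℕ) (hM : 1 ≤ M) (hML : M ≤ L) (hK : K ≤ 2 * M) :
      ‖∑ n ∈ Ico M K, criticalTerm α t n‖ ≤ √(c * T) / √M + √(c / T) * √M := by
    refine (sq_le_sq₀ (norm_nonneg _) (by positivity)).mp ?_
    have hcross : 0 ≤ 2 * (√(c * T) / √M) * (√(c / T) * √M) := by positivity
    calc _ ≤ 15360 * (1 + Real.log M) * (T / M + M / T) :=
          norm_sq_sum_Ico_two_mul_criticalTerm_le hM hK
      _ ≤ 15360 * (1 + Real.log R) * (T / M + M / T) := by
          gcongr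
          exact hML.trans hLR
      _ = (√(c * T) / √M) ^ 2 + (√(c / T) * √M) ^ 2 := by
          rw [div_pow, mul_pow, Real.sq_sqrt (by positivity), Real.sq_sqrt (by positivity),
            Real.sq_sqrt (by positivity)]
          ring
      _ ≤ _ := by
          rw [add_sq]
          linarith
  have hdyadic := norm_sum_Ico_le_of_dyadic (by positivity) (by positivity) hblock hN hNL.le
  set a := √(c * T) / √N with ha
  set b := √(c / T) * √L with hb
  have ha2 : a ^ 2 = c * (T / N) := by
    rw [ha, div_pow, Real.sq_sqrt (by positivity), Real.sq_sqrt (by positivity), mul_div_assoc]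
  have hb2 : b ^ 2 = c * (L / T) := by
    rw [hb, mul_pow, Real.sq_sqrt (by positivity), Real.sq_sqrt (by positivity)]
    ring
  have hneg : 0 ≤ √(c / T) * √(N : ℝ) := by positivity
  calc _ ≤ (4 * a + 8 * b) ^ 2 := by gcongr; linarith
    _ ≤ 128 * (a ^ 2 + b ^ 2) := by nlinarith [sq_nonneg (4 * a - 8 * b), sq_nonneg a]
    _ = 1966080 * (1 + Real.log R) * (T / N + L / T) := by rw [ha2, hb2, hc]; ring
    _ ≤ _ := by gcongr; norm_num

lemma norm_sq_sum_Ico_criticalTerm_tail_le {α t : ℝ} {M R : ℕ} (hM : 1 ≤ M) (hα0 : 0 < |α|)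
    (hα : |α| ≤ π) (ht : 2 * (1 + |t|) ≤ M * |α|) :
    ‖∑ n ∈ Ico M R, criticalTerm α t n‖ ^ 2 ≤ 4900 / (M * |α| ^ 2) := by
  refine (pow_le_pow_left₀ (norm_nonneg _)
    (norm_sum_Ico_criticalTerm_tail_le hM hα0 hα (by linarith)) 2).trans (le_of_eq ?_)
  rw [div_pow, mul_pow, Real.sq_sqrt (by positivity)]
  norm_num

lemma sum_Ico_eq_sum_Ico_min_add_sum_Ico_max {E : Type*} [AddCommMonoid E] (z : ℕ → E)
    (Y M R : ℕ) :
    ∑ n ∈ Ico Y R, z n = ∑ n ∈ Ico Y (min M R), z n + ∑ n ∈ Ico (max M Y) R, z n := by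
  rw [← sum_union (Finset.disjoint_left.mpr fun n hn hn' => by rw [mem_Ico] at hn hn'; omega)]
  congr 1
  ext n
  rw [mem_union, mem_Ico, mem_Ico, mem_Ico]
  omega

/-- The van der Corput bound is used up to `2 (1 + |t|) / |α|`, beyond which the phase has no
stationary point. -/
theorem norm_sq_sum_Ico_criticalTerm_le_add {α t : ℝ} {Y : ℕ} (R : ℕ) (hY : 1 ≤ Y)
    (hα0 : 0 < |α|) (hα : |α| ≤ π) :
    ‖∑ n ∈ Ico Y R, criticalTerm α t n‖ ^ 2 ≤
      25000000 * (1 + Real.log R) * ((1 + |t|) / Y + 1 / |α|) := by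
  have hlog := Real.log_natCast_nonneg R
  have hT1 : 1 ≤ 1 + |t| := by linarith [abs_nonneg t]
  set T := 1 + |t|
  set a := |α|
  set M := ⌈2 * T / a⌉₊
  have hM : 2 * T ≤ M * a := (div_le_iff₀ hα0).mp (Nat.le_ceil _)
  have hMT : (M : ℝ) / T ≤ 6 * (1 / a) := by
    have hM' : (M : ℝ) * a < 2 * T + a := by
      have := mul_lt_mul_of_pos_right
        (Nat.ceil_lt_add_one (show 0 ≤ 2 * T / a by positivity)) hα0
      rwa [add_mul, one_mul, div_mul_cancel₀ _ hα0.ne'] at this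
    rw [mul_one_div, div_le_div_iff₀ (by linarith) hα0]
    linarith [Real.pi_lt_d2]
  have hhead : ‖∑ n ∈ Ico Y (min M R), criticalTerm α t n‖ ^ 2 ≤
      2000000 * (1 + Real.log R) * (T / Y + 6 * (1 / a)) := by
    refine (norm_sq_sum_Ico_criticalTerm_le α t hY (min_le_right M R)).trans ?_
    gcongr
    exact (by gcongr; exact min_le_left M R : ((min M R : ℕ) : ℝ) / T ≤ M / T).trans hMT
  have htail : ‖∑ n ∈ Ico (max M Y) R, criticalTerm α t n‖ ^ 2 ≤ 2450 * (1 / a) := by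
    have hmax : 2 * T ≤ (max M Y : ℕ) * a := hM.trans (by gcongr; exact le_max_left M Y)
    refine (norm_sq_sum_Ico_criticalTerm_tail_le (by omega) hα0 hα hmax).trans ?_
    rw [mul_one_div, div_le_div_iff₀ (by positivity) hα0]
    nlinarith
  rw [sum_Ico_eq_sum_Ico_min_add_sum_Ico_max _ Y M R]
  have hadd : ∀ x y : ℂ, ‖x + y‖ ^ 2 ≤ 2 * (‖x‖ ^ 2 + ‖y‖ ^ 2) := fun x y =>
    (pow_le_pow_left₀ (norm_nonneg _) (norm_add_le x y) 2).trans add_sq_le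
  calc _ ≤ 2 * (2000000 * (1 + Real.log R) * (T / Y + 6 * (1 / a)) + 2450 * (1 / a)) :=
        (hadd _ _).trans (by gcongr)
    _ = 4000000 * (1 + Real.log R) * (T / Y) +
          (24000000 * (1 + Real.log R) + 4900) * (1 / a) := by ring
    _ ≤ 25000000 * (1 + Real.log R) * (T / Y) + 25000000 * (1 + Real.log R) * (1 / a) := by
        gcongr <;> linarith
    _ = _ := by ring

theorem norm_sq_sum_Ico_criticalTerm_le_div_sq {α t : ℝ} {Y : ℕ} (R : ℕ) (hY : 1 ≤ Y)
    (hα0 : 0 < |α|) (hα : |α| ≤ π) :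
    ‖∑ n ∈ Ico Y R, criticalTerm α t n‖ ^ 2 ≤
      300000000 * (1 + Real.log R) * ((1 + |t|) / Y) / |α| ^ 2 := by
  have hlog := Real.log_natCast_nonneg R
  have hT1 : 1 ≤ 1 + |t| := by linarith [abs_nonneg t]
  rcases le_or_gt (2 * (1 + |t|)) (Y * |α|) with hYα | hYα
  · refine (norm_sq_sum_Ico_criticalTerm_tail_le hY hα0 hα hYα).trans ?_
    rw [mul_div_assoc', div_div]
    gcongr
    nlinarith
  · refine (norm_sq_sum_Ico_criticalTerm_le_add R hY hα0 hα).trans ?_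
    set T := 1 + |t|
    set a := |α|
    have hinv : 1 / a ≤ 2 * (T / Y) / a ^ 2 := by
      rw [mul_div_assoc', div_div, div_le_div_iff₀ hα0 (by positivity)]
      nlinarith
    have hone : T / Y ≤ 10 * (T / Y) / a ^ 2 := by
      rw [le_div_iff₀ (by positivity), mul_comm (10 : ℝ)]
      gcongr
      nlinarith [Real.pi_lt_d2]
    calc 25000000 * (1 + Real.log R) * (T / Y + 1 / a)
        ≤ 25000000 * (1 + Real.log R) * (10 * (T / Y) / a ^ 2 + 2 * (T / Y) / a ^ 2) := by gcongr
      _ = _ := by ring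

end CriticalSums

/-! ### Fourth moment of Dirichlet polynomials on the critical line -/

section FourthMoment

open Finset

variable {d : ℕ}

lemma sumPrimitive_le_sum {f g : DirichletCharacter ℂ d → ℝ}
    (hfg : ∀ χ, χ.IsPrimitive → f χ ≤ g χ) (hg : ∀ χ, 0 ≤ g χ) :
    sumPrimitive d f ≤ ∑ χ, g χ := by
  rw [sumPrimitive, finsum_mem_eq_finite_toFinset_sum f (Set.toFinite _)]
  refine (sum_le_sum fun χ hχ => hfg χ ?_).trans (sum_le_univ_sum_of_nonneg hg)
  rwa [Set.Finite.mem_toFinset] at hχ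

variable [NeZero d]

lemma monotone_log_natCast : Monotone fun n : ℕ => Real.log n := fun m n hmn => by
  rcases Nat.eq_zero_or_pos m with rfl | hm
  · simpa only [Nat.cast_zero, Real.log_zero] using Real.log_natCast_nonneg n
  · exact Real.log_le_log (by exact_mod_cast hm) (by exact_mod_cast hmn)

lemma log_natCast_add_one_le (n : ℕ) : Real.log (n + 1 : ℕ) ≤ 1 + Real.log n := by
  rcases Nat.eq_zero_or_pos n with rfl | hn
  · simp
  have hn1 : (1 : ℝ) ≤ n := by exact_mod_cast hn
  have hsub := log_add_one_sub_log (x := n) (by positivity)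
  have hinv : 1 / (n : ℝ) ≤ 1 := div_le_one_of_le₀ hn1 (by positivity)
  push_cast
  linarith [log_one_add_one_div_le (x := n) (by positivity)]

lemma exists_nat_le_sq_and_sub_one_sq_le {x : ℝ} (hx : 0 < x) :
    ∃ Y : ℕ, 1 ≤ Y ∧ x ≤ (Y : ℝ) ^ 2 ∧ ((Y - 1 : ℕ) : ℝ) ^ 2 ≤ x := by
  have hY : 0 < ⌈√x⌉₊ := Nat.ceil_pos.mpr (Real.sqrt_pos.mpr hx)
  refine ⟨⌈√x⌉₊, hY, (Real.sqrt_le_left (by positivity)).mp (Nat.le_ceil _), ?_⟩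
  have : ((⌈√x⌉₊ - 1 : ℕ) : ℝ) ≤ √x := (Nat.lt_ceil.mp (by omega)).le
  exact (pow_le_pow_left₀ (Nat.cast_nonneg _) this 2).trans_eq (Real.sq_sqrt hx.le)

lemma sum_norm_pow_four_criticalTerm_le (t : ℝ) (N : ℕ) :
    ∑ χ : DirichletCharacter ℂ d, ‖∑ n ∈ Icc 1 N, criticalTerm 0 t n * χ n‖ ^ 4 ≤
      2 * (1 + Real.log N) ^ 5 * (d + (N : ℝ) ^ 2) := by
  have hterm (n : ℕ) : #n.divisors * ‖criticalTerm 0 t n‖ ^ 2 = (#n.divisors : ℝ) / n := by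
    rw [norm_criticalTerm, div_pow, Real.sq_sqrt (by positivity), one_pow, mul_one_div]
  have hdiv : ∑ n ∈ Icc 1 N, #n.divisors * ‖criticalTerm 0 t n‖ ^ 2 ≤ (1 + Real.log N) ^ 2 := by
    simp_rw [hterm]
    exact sum_card_divisors_div_le N
  have hdiv' : ∑ n ∈ Icc 1 N, n * (#n.divisors * ‖criticalTerm 0 t n‖ ^ 2) ≤
      N * (1 + Real.log N) ^ 2 := by
    refine le_trans ?_ (mul_le_mul_of_nonneg_left hdiv N.cast_nonneg)
    rw [mul_sum]
    gcongr with n hn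
    exact (mem_Icc.mp hn).2
  calc _ ≤ _ := sum_norm_pow_four_dirichletPolynomial_le N (criticalTerm 0 t)
    _ ≤ 2 * (1 + Real.log N) *
          (d * ((1 + Real.log N) ^ 2) ^ 2 + (N * (1 + Real.log N) ^ 2) ^ 2) := by gcongr
    _ = _ := by ring

/-- The hypotheses are the shape of the bounds for the dual sums, whose coefficient at `a` is an
exponential sum of frequency `a / d`. -/
lemma sum_norm_pow_four_inv_le {M : ℕ} (hM : M ≤ d) {B r T : ℝ} (hB : 0 ≤ B) (hr : 0 ≤ r)
    (hT : 1 ≤ T) (hrT : d * r ^ 2 ≤ T) {c : ℕ → ℂ}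
    (hc : ∀ a ∈ Icc 1 M, ‖c a‖ ^ 2 ≤ B * (r + d / a))
    (hc' : ∀ a ∈ Icc 1 M, ‖c a‖ ^ 2 ≤ B * r * (d / a) ^ 2) :
    ∑ χ : DirichletCharacter ℂ d, ‖∑ a ∈ Icc 1 M, c a * χ⁻¹ a‖ ^ 4 ≤
      10 * B ^ 2 * (1 + Real.log d) ^ 5 * (d ^ 3 * T) := by
  have hd : (1 : ℝ) ≤ d := by exact_mod_cast NeZero.one_le
  have hlog : Real.log M ≤ Real.log d := monotone_log_natCast hM
  have hdiv : ∑ a ∈ Icc 1 M, (#a.divisors : ℝ) / a ≤ (1 + Real.log d) ^ 2 :=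
    (sum_card_divisors_div_le M).trans (by gcongr)
  have hfirst : ∑ a ∈ Icc 1 M, #a.divisors * ‖c a‖ ^ 2 ≤
      B * d * (r + 1) * (1 + Real.log d) ^ 2 := by
    refine le_trans ?_ (mul_le_mul_of_nonneg_left hdiv (by positivity))
    rw [mul_sum]
    refine sum_le_sum fun a ha => ?_
    have ha1 : (0 : ℝ) < a := by exact_mod_cast (mem_Icc.mp ha).1
    have had : (a : ℝ) ≤ d := by exact_mod_cast (mem_Icc.mp ha).2.trans hM
    calc _ ≤ #a.divisors * (B * (r + d / a)) := by gcongr; exact hc a ha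
      _ = #a.divisors * (B * ((a * r + d) / a)) := by field_simp
      _ ≤ #a.divisors * (B * ((d * r + d) / a)) := by gcongr
      _ = _ := by ring
  have hsecond : ∑ a ∈ Icc 1 M, a * (#a.divisors * ‖c a‖ ^ 2) ≤
      B * r * d ^ 2 * (1 + Real.log d) ^ 2 := by
    refine le_trans ?_ (mul_le_mul_of_nonneg_left hdiv (by positivity))
    rw [mul_sum]
    refine sum_le_sum fun a ha => ?_
    have ha1 : (0 : ℝ) < a := by exact_mod_cast (mem_Icc.mp ha).1
    calc _ ≤ a * (#a.divisors * (B * r * (d / a) ^ 2)) := by gcongr; exact hc' a ha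
      _ = _ := by field_simp
  have hsq : d * (r + 1) ^ 2 + d * (d * r ^ 2) ≤ 5 * (d * T) := by
    nlinarith [mul_le_mul_of_nonneg_left hrT (by positivity : (0 : ℝ) ≤ d),
      mul_le_mul_of_nonneg_left hT (by positivity : (0 : ℝ) ≤ d),
      mul_le_mul_of_nonneg_left (sq_nonneg (r - 1)) (by positivity : (0 : ℝ) ≤ d)]
  rw [← Equiv.sum_comp (Equiv.inv (DirichletCharacter ℂ d))]
  simp only [Equiv.inv_apply, inv_inv]
  calc _ ≤ _ := sum_norm_pow_four_dirichletPolynomial_le M c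
    _ ≤ 2 * (1 + Real.log d) * (d * (B * d * (r + 1) * (1 + Real.log d) ^ 2) ^ 2 +
          (B * r * d ^ 2 * (1 + Real.log d) ^ 2) ^ 2) := by gcongr
    _ = 2 * B ^ 2 * (1 + Real.log d) ^ 5 * d ^ 2 * (d * (r + 1) ^ 2 + d * (d * r ^ 2)) := by ring
    _ ≤ 2 * B ^ 2 * (1 + Real.log d) ^ 5 * d ^ 2 * (5 * (d * T)) := by gcongr
    _ = _ := by ring

lemma additiveTwist_criticalTerm (s : Finset ℕ) (t : ℝ) (j : ℤ) :
    additiveTwist s (criticalTerm 0 t) (j : ZMod d) =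
      ∑ n ∈ s, criticalTerm (2 * π * (j / d)) t n := by
  refine sum_congr rfl fun n _ => ?_
  have hcast : (n : ZMod d) * j = ((n * j : ℤ) : ZMod d) := by push_cast; rfl
  rw [hcast, ZMod.stdAddChar_coe, criticalTerm, criticalTerm, mul_assoc, ← Complex.exp_add]
  congr 2
  push_cast
  ring

lemma norm_sq_additiveTwist_criticalTerm_le (t : ℝ) {Y : ℕ} (R : ℕ) (hY : 1 ≤ Y) {j : ℤ}
    (hj0 : j ≠ 0) (hj : 2 * |(j : ℝ)| ≤ d) :
    ‖additiveTwist (Ico Y R) (criticalTerm 0 t) (j : ZMod d)‖ ^ 2 ≤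
        300000000 * (1 + Real.log R) * ((1 + |t|) / Y + d / |(j : ℝ)|) ∧
      ‖additiveTwist (Ico Y R) (criticalTerm 0 t) (j : ZMod d)‖ ^ 2 ≤
        300000000 * (1 + Real.log R) * ((1 + |t|) / Y) * (d / |(j : ℝ)|) ^ 2 := by
  have hd : (0 : ℝ) < d := by exact_mod_cast NeZero.pos d
  have habs : |2 * π * ((j : ℝ) / d)| = 2 * π * (|(j : ℝ)| / d) := by
    rw [abs_mul, abs_div, abs_of_pos two_pi_pos, abs_of_pos hd]
  have hα0 : 0 < |2 * π * ((j : ℝ) / d)| := by rw [habs]; positivity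
  have hα : |2 * π * ((j : ℝ) / d)| ≤ π := by
    have : 2 * (|(j : ℝ)| / d) ≤ 1 := by rwa [mul_div_assoc', div_le_one hd]
    rw [habs]
    nlinarith [Real.pi_pos]
  have hinv : 1 / |2 * π * ((j : ℝ) / d)| ≤ d / |(j : ℝ)| := by
    rw [habs, ← one_div_div |(j : ℝ)|]
    refine one_div_le_one_div_of_le (by positivity) (le_mul_of_one_le_left (by positivity) ?_)
    linarith [Real.pi_gt_three]
  rw [additiveTwist_criticalTerm]
  refine ⟨(norm_sq_sum_Ico_criticalTerm_le_add R hY hα0 hα).trans ?_,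
    (norm_sq_sum_Ico_criticalTerm_le_div_sq R hY hα0 hα).trans ?_⟩
  · gcongr
    norm_num
  · rw [div_eq_mul_one_div _ (|2 * π * ((j : ℝ) / d)| ^ 2), ← one_div_pow]
    gcongr

lemma sum_norm_pow_four_additiveTwist_criticalTerm_le (t : ℝ) {Y M : ℕ} (R : ℕ) (hY : 1 ≤ Y)
    (hYd : d * (1 + |t|) ≤ (Y : ℝ) ^ 2) (hM : 2 * M ≤ d) {ε : ℤ} (hε : |ε| = 1) :
    ∑ χ : DirichletCharacter ℂ d, ‖∑ a ∈ Icc 1 M,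
        additiveTwist (Ico Y R) (criticalTerm 0 t) ((ε * a : ℤ) : ZMod d) * χ⁻¹ a‖ ^ 4 ≤
      10 * (300000000 * (1 + Real.log R)) ^ 2 * (1 + Real.log d) ^ 5 * (d ^ 3 * (1 + |t|)) := by
  have hrT : d * ((1 + |t|) / Y) ^ 2 ≤ 1 + |t| := by
    rw [div_pow, mul_div_assoc', div_le_iff₀ (by positivity)]
    nlinarith [abs_nonneg t]
  have hbound (a : ℕ) (ha : a ∈ Icc 1 M) := by
    rw [mem_Icc] at ha
    have habs : |((ε * a : ℤ) : ℝ)| = a := by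
      rw [← Int.cast_abs, abs_mul, hε, one_mul, Nat.abs_cast, Int.cast_natCast]
    have hne : ε * (a : ℤ) ≠ 0 := by
      rw [← abs_ne_zero, abs_mul, hε, one_mul, Nat.abs_cast]
      omega
    have := norm_sq_additiveTwist_criticalTerm_le (d := d) t R hY hne (by
      rw [habs]
      exact_mod_cast (by omega : 2 * a ≤ d))
    rwa [habs] at this
  exact sum_norm_pow_four_inv_le (by omega) (by positivity) (by positivity)
    (by linarith [abs_nonneg t]) hrT (fun a ha => (hbound a ha).1) fun a ha => (hbound a ha).2

lemma sum_Icc_eq_sum_Icc_min_add_sum_Ico {E : Type*} [AddCommMonoid E] (z : ℕ → E) {Y : ℕ}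
    (hY : 1 ≤ Y) (N : ℕ) :
    ∑ n ∈ Icc 1 N, z n = ∑ n ∈ Icc 1 (min N (Y - 1)), z n + ∑ n ∈ Ico Y (N + 1), z n := by
  rw [← sum_union (Finset.disjoint_left.mpr fun n hn hn' => by
    rw [mem_Icc] at hn; rw [mem_Ico] at hn'; omega)]
  congr 1
  ext n
  rw [mem_union, mem_Icc, mem_Icc, mem_Ico]
  omega

lemma norm_pow_four_sum_Icc_le (hd : 2 ≤ d) {χ : DirichletCharacter ℂ d} (hχ : χ.IsPrimitive)
    (z : ℕ → ℂ) {Y : ℕ} (hY : 1 ≤ Y) (N : ℕ) :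
    ‖∑ n ∈ Icc 1 N, z n * χ n‖ ^ 4 ≤
      8 * ‖∑ n ∈ Icc 1 (min N (Y - 1)), z n * χ n‖ ^ 4 + 64 / (d : ℝ) ^ 2 *
        (‖∑ a ∈ Icc 1 (d / 2),
            additiveTwist (Ico Y (N + 1)) z ((1 * a : ℤ) : ZMod d) * χ⁻¹ a‖ ^ 4 +
          ‖∑ a ∈ Icc 1 ((d - 1) / 2),
            additiveTwist (Ico Y (N + 1)) z ((-1 * a : ℤ) : ZMod d) * χ⁻¹ a‖ ^ 4) := by
  have hdual := sq_mul_norm_sum_pow_four_le hd hχ (Ico Y (N + 1)) z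
  rw [← le_div_iff₀' (by positivity)] at hdual
  rw [sum_Icc_eq_sum_Icc_min_add_sum_Ico _ hY]
  push_cast
  simp only [one_mul, neg_one_mul]
  refine (norm_add_pow_four_le _ _).trans ((mul_le_mul_of_nonneg_left
    (add_le_add_right hdual _) (by norm_num)).trans (le_of_eq ?_))
  ring

/-- The cutoff `√(d (1 + |t|))` balances the direct bound for the terms below it against the bound
for the dual of the terms above it. -/
theorem sumPrimitive_norm_pow_four_criticalTerm_le (hd : 2 ≤ d) (t : ℝ) {N : ℕ} (hN : 1 ≤ N) :
    sumPrimitive d (fun χ => ‖∑ n ∈ Icc 1 N, criticalTerm 0 t n * χ n‖ ^ 4) ≤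
      10 ^ 21 * (1 + Real.log (d * N)) ^ 7 * (d * (1 + |t|)) := by
  set T := 1 + |t|
  have hT1 : 1 ≤ T := by linarith [abs_nonneg t]
  obtain ⟨Y, hY, hYd, hYd'⟩ := exists_nat_le_sq_and_sub_one_sq_le (by positivity : 0 < d * T)
  set L := 1 + Real.log (d * N) with hL
  have hlogN := Real.log_natCast_nonneg N
  have hlogd := Real.log_natCast_nonneg d
  rw [Real.log_mul (by positivity) (by positivity)] at hL
  have hL1 : 1 ≤ L := by linarith
  have hsmall : ∑ χ : DirichletCharacter ℂ d,
      ‖∑ n ∈ Icc 1 (min N (Y - 1)), criticalTerm 0 t n * χ n‖ ^ 4 ≤ 4 * L ^ 5 * (d * T) := by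
    have hlog := monotone_log_natCast (min_le_left N (Y - 1))
    have hsq : ((min N (Y - 1) : ℕ) : ℝ) ^ 2 ≤ d * T := le_trans (by gcongr; omega) hYd'
    have hdT : (d : ℝ) ≤ d * T := le_mul_of_one_le_right (by positivity) hT1
    calc _ ≤ _ := sum_norm_pow_four_criticalTerm_le t (min N (Y - 1))
      _ ≤ 2 * L ^ 5 * (d * T + d * T) := by gcongr; linarith
      _ = _ := by ring
  have hlarge {ε : ℤ} (hε : |ε| = 1) {K : ℕ} (hK : 2 * K ≤ d) :
      ∑ χ : DirichletCharacter ℂ d, ‖∑ a ∈ Icc 1 K, additiveTwist (Ico Y (N + 1))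
        (criticalTerm 0 t) ((ε * a : ℤ) : ZMod d) * χ⁻¹ a‖ ^ 4 ≤
      10 * (300000000 * (2 * L)) ^ 2 * L ^ 5 * (d ^ 3 * T) := by
    have hlog := log_natCast_add_one_le N
    refine (sum_norm_pow_four_additiveTwist_criticalTerm_le t (N + 1) hY hYd hK hε).trans ?_
    gcongr <;> linarith
  refine (sumPrimitive_le_sum (fun χ hχ => norm_pow_four_sum_Icc_le hd hχ _ hY N)
    fun χ => by positivity).trans ?_
  rw [sum_add_distrib, ← mul_sum, ← mul_sum, sum_add_distrib]
  calc _ ≤ 8 * (4 * L ^ 5 * (d * T)) + 64 / (d : ℝ) ^ 2 *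
          (10 * (300000000 * (2 * L)) ^ 2 * L ^ 5 * (d ^ 3 * T) +
            10 * (300000000 * (2 * L)) ^ 2 * L ^ 5 * (d ^ 3 * T)) := by
        gcongr
        · exact hlarge abs_one (by omega)
        · exact hlarge (by norm_num) (by omega)
    _ = 32 * L ^ 5 * (d * T) + 460800000000000000000 * L ^ 7 * (d * T) := by field_simp; ring
    _ ≤ 32 * L ^ 7 * (d * T) + 460800000000000000000 * L ^ 7 * (d * T) := by
        gcongr
        norm_num
    _ ≤ _ := by linarith [show 0 ≤ L ^ 7 * (d * T) by positivity]

end FourthMoment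

/-! ### Truncated Perron kernels -/

section PerronKernel

open intervalIntegral

/-- The integral of `exp (x * s) / s` with respect to `Im s` over the segment
from `c - iV` to `c + iV`. -/
noncomputable def perronKernel (c V x : ℝ) : ℂ :=
  ∫ u in (-V)..V, cexp (x * (c + u * I)) / (c + u * I)

variable {a b c V x y : ℝ}

lemma norm_exp_ofReal_mul_add_mul_I (x σ v : ℝ) :
    ‖cexp (x * (σ + v * I))‖ = Real.exp (x * σ) := by
  rw [Complex.norm_exp]
  simp

lemma abs_le_norm_add_mul_I_left (σ v : ℝ) : |σ| ≤ ‖(σ + v * I : ℂ)‖ := by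
  simpa using Complex.abs_re_le_norm (σ + v * I : ℂ)

lemma abs_le_norm_add_mul_I_right (σ v : ℝ) : |v| ≤ ‖(σ + v * I : ℂ)‖ := by
  simpa using Complex.abs_im_le_norm (σ + v * I : ℂ)

lemma add_mul_I_ne_zero_of_left (hc : c ≠ 0) (u : ℝ) : (c + u * I : ℂ) ≠ 0 :=
  norm_pos_iff.mp ((abs_pos.mpr hc).trans_le (abs_le_norm_add_mul_I_left c u))

lemma add_mul_I_ne_zero_of_right {v : ℝ} (hv : v ≠ 0) (σ : ℝ) : (σ + v * I : ℂ) ≠ 0 :=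
  norm_pos_iff.mp ((abs_pos.mpr hv).trans_le (abs_le_norm_add_mul_I_right σ v))

lemma continuous_exp_mul_div (hc : c ≠ 0) (x : ℝ) :
    Continuous fun u : ℝ => cexp (x * (c + u * I)) / (c + u * I) :=
  Continuous.div (by fun_prop) (by fun_prop) (add_mul_I_ne_zero_of_left hc)

lemma norm_exp_mul_div_le (hc : c ≠ 0) (x u : ℝ) :
    ‖cexp (x * (c + u * I)) / (c + u * I)‖ ≤ Real.exp (x * c) / |c| := by
  rw [norm_div, norm_exp_ofReal_mul_add_mul_I]
  gcongr
  exact abs_le_norm_add_mul_I_left c u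

lemma norm_perronKernel_le (hc : c ≠ 0) (hV : 0 ≤ V) (x : ℝ) :
    ‖perronKernel c V x‖ ≤ 2 * V * (Real.exp (x * c) / |c|) := by
  refine (norm_integral_le_of_norm_le_const fun u _ => norm_exp_mul_div_le hc x u).trans_eq ?_
  rw [sub_neg_eq_add, ← two_mul, abs_of_nonneg (mul_nonneg zero_le_two hV), mul_comm]

lemma norm_one_add_mul_I (u : ℝ) : ‖(1 + u * I : ℂ)‖ = √(1 + u ^ 2) := by
  rw [Complex.norm_eq_sqrt_sq_add_sq]
  simp

lemma integral_inv_sqrt_one_add_sq (a b : ℝ) :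
    ∫ u in a..b, (√(1 + u ^ 2))⁻¹ = Real.arsinh b - Real.arsinh a :=
  integral_eq_sub_of_hasDerivAt (fun u _ => Real.hasDerivAt_arsinh u)
    (Continuous.intervalIntegrable
      (Continuous.inv₀ (by fun_prop) fun u => by positivity) _ _)

lemma arsinh_le_log_three_mul (hV : 1 ≤ V) : Real.arsinh V ≤ Real.log (3 * V) := by
  refine Real.log_le_log (by positivity) ?_
  have : √(1 + V ^ 2) ≤ 2 * V := Real.sqrt_le_iff.mpr ⟨by positivity, by nlinarith⟩
  linarith

lemma norm_perronKernel_one_le_log (hV : 1 ≤ V) (x : ℝ) :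
    ‖perronKernel 1 V x‖ ≤ Real.exp x * (2 * Real.log (3 * V)) := by
  calc
    _ ≤ ∫ u in (-V)..V, Real.exp x * (√(1 + u ^ 2))⁻¹ := by
        refine norm_integral_le_of_norm_le (by linarith) (.of_forall fun u _ => ?_)
          ((continuous_const.mul (Continuous.inv₀ (by fun_prop)
            fun u => by positivity)).intervalIntegrable _ _)
        rw [norm_div, norm_exp_ofReal_mul_add_mul_I, ofReal_one, norm_one_add_mul_I, mul_one,
          div_eq_mul_inv]
    _ = Real.exp x * (2 * Real.arsinh V) := by
        rw [intervalIntegral.integral_const_mul, integral_inv_sqrt_one_add_sq, Real.arsinh_neg]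
        ring
    _ ≤ _ := by
        gcongr
        exact arsinh_le_log_three_mul hV

lemma hasDerivAt_exp_mul_div (hx : x ≠ 0) (u : ℝ) :
    HasDerivAt (fun u : ℝ => cexp (x * (1 + u * I)) / (x * I * (1 + u * I)))
      (cexp (x * (1 + u * I)) / (1 + u * I) - cexp (x * (1 + u * I)) / (x * (1 + u * I) ^ 2))
      u := by
  have hs : (1 + u * I : ℂ) ≠ 0 := by simpa using add_mul_I_ne_zero_of_left one_ne_zero u
  have hxc : (x : ℂ) ≠ 0 := ofReal_ne_zero.mpr hx
  have hline : HasDerivAt (fun u : ℝ => (1 + u * I : ℂ)) I u := by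
    simpa using ((Complex.ofRealCLM.hasDerivAt (x := u)).mul_const I).const_add 1
  refine ((hline.const_mul (x : ℂ)).cexp.div (hline.const_mul (x * I : ℂ))
    (mul_ne_zero (mul_ne_zero hxc I_ne_zero) hs)).congr_deriv ?_
  generalize (1 + u * I : ℂ) = s at hs
  field_simp

lemma norm_integral_exp_mul_div_sq_le (hV : 0 ≤ V) (x : ℝ) :
    ‖∫ u in (-V)..V, cexp (x * (1 + u * I)) / (x * (1 + u * I) ^ 2)‖ ≤
      Real.exp x / |x| * π := by
  calc
    _ ≤ ∫ u in (-V)..V, Real.exp x / |x| * (1 + u ^ 2)⁻¹ := by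
        refine norm_integral_le_of_norm_le (by linarith) (.of_forall fun u _ => ?_)
          ((continuous_const.mul (Continuous.inv₀ (by fun_prop)
            fun u => by positivity)).intervalIntegrable _ _)
        have hexp := norm_exp_ofReal_mul_add_mul_I x 1 u
        rw [ofReal_one, mul_one] at hexp
        rw [norm_div, hexp, norm_mul, norm_pow, norm_one_add_mul_I, Real.sq_sqrt (by positivity),
          norm_real, Real.norm_eq_abs, ← div_div, div_eq_mul_inv _ (1 + u ^ 2)]
    _ = Real.exp x / |x| * (2 * Real.arctan V) := by
        rw [intervalIntegral.integral_const_mul, integral_inv_one_add_sq, Real.arctan_neg]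
        ring
    _ ≤ _ := by
        gcongr
        linarith [Real.arctan_lt_pi_div_two V]

/-- Integrate by parts once, so that the integrand decays quadratically. -/
lemma norm_perronKernel_one_le_div_abs (hV : 0 ≤ V) (hx : x ≠ 0) :
    ‖perronKernel 1 V x‖ ≤ Real.exp x / |x| * (2 + π) := by
  have hne (u : ℝ) : (1 + u * I : ℂ) ≠ 0 := by simpa using add_mul_I_ne_zero_of_left one_ne_zero u
  have hxc : (x : ℂ) ≠ 0 := ofReal_ne_zero.mpr hx
  have hker : IntervalIntegrable (fun u : ℝ => cexp (x * (1 + u * I)) / (1 + u * I))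
      volume (-V) V := by
    simpa using (continuous_exp_mul_div one_ne_zero x).intervalIntegrable (-V) V
  have hsq : IntervalIntegrable (fun u : ℝ => cexp (x * (1 + u * I)) / (x * (1 + u * I) ^ 2))
      volume (-V) V :=
    (Continuous.div (by fun_prop) (by fun_prop) fun u =>
      mul_ne_zero hxc (pow_ne_zero _ (hne u))).intervalIntegrable _ _
  have hparts := integral_eq_sub_of_hasDerivAt (fun u _ => hasDerivAt_exp_mul_div hx u)
    (hker.sub hsq)
  rw [integral_sub hker hsq, sub_eq_iff_eq_add] at hparts
  have hbdry (u : ℝ) : ‖cexp (x * (1 + u * I)) / (x * I * (1 + u * I))‖ ≤ Real.exp x / |x| := by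
    rw [mul_comm (x * I : ℂ), ← div_div, norm_div, norm_mul, norm_I, mul_one, norm_real,
      Real.norm_eq_abs]
    gcongr
    simpa using norm_exp_mul_div_le one_ne_zero x u
  rw [perronKernel, ofReal_one, hparts]
  refine (norm_add_le_of_le (norm_sub_le_of_le (hbdry V) (hbdry (-V)))
    (norm_integral_exp_mul_div_sq_le hV x)).trans_eq ?_
  ring

lemma norm_perronKernel_one_one_le (hV : 0 ≤ V) : ‖perronKernel 1 V 1‖ ≤ 15 := by
  refine (norm_perronKernel_one_le_div_abs hV one_ne_zero).trans ?_
  rw [abs_one, div_one]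
  nlinarith [Real.exp_one_lt_d9, Real.pi_lt_d2, Real.exp_pos 1]

lemma norm_integral_vertical_sub_le {f : ℂ → ℂ} {A : ℝ}
    (hf : DifferentiableOn ℂ f (Set.uIcc a b ×ℂ Set.uIcc (-V) V))
    (hbot : ‖∫ σ in a..b, f (σ + (-V : ℝ) * I)‖ ≤ A) (htop : ‖∫ σ in a..b, f (σ + V * I)‖ ≤ A) :
    ‖(∫ u in (-V)..V, f (b + u * I)) - ∫ u in (-V)..V, f (a + u * I)‖ ≤ 2 * A := by
  have hrect := Complex.integral_boundary_rect_eq_zero_of_differentiableOn f ⟨a, -V⟩ ⟨b, V⟩ hf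
  simp only [smul_eq_mul] at hrect
  have hdiff : I * ((∫ u in (-V)..V, f (b + u * I)) - ∫ u in (-V)..V, f (a + u * I)) =
      (∫ σ in a..b, f (σ + V * I)) - ∫ σ in a..b, f (σ + (-V : ℝ) * I) := by
    linear_combination hrect
  rw [← one_mul ‖_‖, ← norm_I, ← norm_mul, hdiff, two_mul]
  exact norm_sub_le_of_le htop hbot

lemma integral_exp_const_mul (hx : x ≠ 0) (a b : ℝ) :
    ∫ σ in a..b, Real.exp (x * σ) = (Real.exp (x * b) - Real.exp (x * a)) / x := by
  rw [integral_comp_mul_left Real.exp hx, integral_exp, smul_eq_mul, inv_mul_eq_div]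

lemma norm_integral_exp_mul_div_horizontal_le (hab : a ≤ b) (hx : x ≠ 0) {v : ℝ} (hv : v ≠ 0) :
    ‖∫ σ in a..b, cexp (x * (σ + v * I)) / (σ + v * I)‖ ≤
      (Real.exp (x * b) - Real.exp (x * a)) / x / |v| := by
  rw [← integral_exp_const_mul hx, ← intervalIntegral.integral_div]
  refine norm_integral_le_of_norm_le hab (.of_forall fun σ _ => ?_)
    (Continuous.intervalIntegrable (by fun_prop) _ _)
  rw [norm_div, norm_exp_ofReal_mul_add_mul_I]
  gcongr
  exact abs_le_norm_add_mul_I_right σ v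

lemma le_of_forall_one_le_le_add_div {k : ℝ} (h : ∀ R, 1 ≤ R → a ≤ b + k / R) : a ≤ b := by
  have hlim : Filter.Tendsto (fun R : ℝ => b + k / R) Filter.atTop (nhds (b + 0)) :=
    tendsto_const_nhds.add (tendsto_const_nhds.div_atTop Filter.tendsto_id)
  rw [add_zero] at hlim
  exact ge_of_tendsto hlim (Filter.eventually_atTop.mpr ⟨1, h⟩)

/-- The contour is moved to `Re s = +∞`, where `exp (x * s)` decays. -/
lemma norm_perronKernel_le_of_neg (hc : 0 < c) (hV : 0 < V) (hx : x < 0) :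
    ‖perronKernel c V x‖ ≤ 2 * (Real.exp (x * c) / -x / V) := by
  refine le_of_forall_one_le_le_add_div (k := 2 * V) fun R hR => ?_
  have hhor (v : ℝ) (hv : |v| = V) :
      ‖∫ σ in c..c + R, cexp (x * (σ + v * I)) / (σ + v * I)‖ ≤ Real.exp (x * c) / -x / V := by
    refine (norm_integral_exp_mul_div_horizontal_le (by linarith) hx.ne
      (abs_pos.mp (hv ▸ hV))).trans ?_
    rw [hv]
    gcongr ?_ / V
    rw [← neg_div_neg_eq, neg_sub]
    gcongr
    · exact (neg_pos.mpr hx).le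
    · linarith [Real.exp_pos (x * (c + R))]
  have hshift := norm_integral_vertical_sub_le (f := fun s => cexp (x * s) / s) (a := c)
    (b := c + R) (fun s hs => ?_) (hhor (-V) (by rw [abs_neg, abs_of_pos hV]))
    (hhor V (abs_of_pos hV))
  · rw [norm_sub_rev] at hshift
    refine (norm_le_norm_sub_add _ _).trans (add_le_add hshift
      ((norm_perronKernel_le (by positivity) hV.le x).trans ?_))
    rw [abs_of_pos (by positivity), ← mul_one_div (2 * V)]
    gcongr
    · exact Real.exp_le_one_iff.mpr (mul_nonpos_of_nonpos_of_nonneg hx.le (by positivity))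
    · linarith
  · have hs0 : s ≠ 0 := by
      rintro rfl
      have := hs.1
      rw [Set.mem_preimage, zero_re, Set.uIcc_of_le (by linarith)] at this
      exact this.1.not_gt hc
    exact (DifferentiableAt.div (by fun_prop) differentiableAt_id hs0).differentiableWithinAt

lemma differentiable_dslope_exp_mul_sub_exp_mul (x y : ℂ) :
    Differentiable ℂ (dslope (fun s => cexp (x * s) - cexp (y * s)) 0) := by
  rw [← differentiableOn_univ, Complex.differentiableOn_dslope Filter.univ_mem]
  fun_prop

lemma dslope_exp_mul_sub_exp_mul (x y : ℂ) {s : ℂ} (hs : s ≠ 0) :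
    dslope (fun s => cexp (x * s) - cexp (y * s)) 0 s = cexp (x * s) / s - cexp (y * s) / s := by
  rw [dslope_of_ne _ hs, slope_def_field]
  simp only [mul_zero, sub_self, sub_zero, sub_div]

lemma integral_dslope_eq_perronKernel_sub (hc : c ≠ 0) (V x y : ℝ) :
    ∫ u in (-V)..V, dslope (fun s : ℂ => cexp (x * s) - cexp (y * s)) 0 (c + u * I) =
      perronKernel c V x - perronKernel c V y := by
  rw [perronKernel, perronKernel,
    ← integral_sub ((continuous_exp_mul_div hc x).intervalIntegrable _ _)
      ((continuous_exp_mul_div hc y).intervalIntegrable _ _)]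
  exact integral_congr fun u _ => dslope_exp_mul_sub_exp_mul x y (add_mul_I_ne_zero_of_left hc u)

lemma norm_integral_dslope_horizontal_le (hab : a ≤ b) (hx : 0 < x) (hy : 0 < y) {v : ℝ}
    (hv : v ≠ 0) :
    ‖∫ σ in a..b, dslope (fun s : ℂ => cexp (x * s) - cexp (y * s)) 0 (σ + v * I)‖ ≤
      Real.exp (x * b) / x / |v| + Real.exp (y * b) / y / |v| := by
  have hint (z : ℝ) : IntervalIntegrable (fun σ : ℝ => cexp (z * (σ + v * I)) / (σ + v * I))
      volume a b :=
    (Continuous.div (by fun_prop) (by fun_prop)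
      (add_mul_I_ne_zero_of_right hv)).intervalIntegrable _ _
  have hle (z : ℝ) (hz : 0 < z) :
      ‖∫ σ in a..b, cexp (z * (σ + v * I)) / (σ + v * I)‖ ≤ Real.exp (z * b) / z / |v| := by
    refine (norm_integral_exp_mul_div_horizontal_le hab hz.ne' hv).trans ?_
    gcongr
    linarith [Real.exp_pos (z * a)]
  rw [integral_congr fun σ _ => dslope_exp_mul_sub_exp_mul x y (add_mul_I_ne_zero_of_right hv σ),
    integral_sub (hint x) (hint y)]
  exact norm_sub_le_of_le (hle x hx) (hle y hy)

/-- In the difference the poles at `0` cancel, so the contour can be moved to `Re s = -∞` without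
collecting a residue. -/
lemma norm_perronKernel_sub_perronKernel_le (hc : 0 < c) (hV : 0 < V) (hx : 0 < x) (hy : 0 < y) :
    ‖perronKernel c V x - perronKernel c V y‖ ≤
      2 * (Real.exp (x * c) / x / V + Real.exp (y * c) / y / V) := by
  refine le_of_forall_one_le_le_add_div (k := 4 * V) fun R hR => ?_
  have hhor (v : ℝ) (hv : |v| = V) := hv ▸ norm_integral_dslope_horizontal_le
    (show -R ≤ c by linarith) hx hy (abs_pos.mp (hv ▸ hV))
  have hshift := norm_integral_vertical_sub_le
    (differentiable_dslope_exp_mul_sub_exp_mul x y).differentiableOn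
    (hhor (-V) (by rw [abs_neg, abs_of_pos hV])) (hhor V (abs_of_pos hV))
  have hR0 : -R ≠ 0 := by linarith
  rw [integral_dslope_eq_perronKernel_sub hc.ne', integral_dslope_eq_perronKernel_sub hR0]
    at hshift
  have hfar (z : ℝ) (hz : 0 < z) : ‖perronKernel (-R) V z‖ ≤ 2 * V * (1 / R) := by
    refine (norm_perronKernel_le hR0 hV.le z).trans ?_
    rw [abs_neg, abs_of_pos (by positivity)]
    gcongr
    exact Real.exp_le_one_iff.mpr (by nlinarith)
  refine (norm_le_norm_sub_add _ _).trans (add_le_add hshift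
    ((norm_sub_le_of_le (hfar x hx) (hfar y hy)).trans_eq ?_))
  ring

end PerronKernel

/-! ### Truncated Perron formula -/

section PerronFormula

open Finset

variable {V X : ℝ} {n : ℕ}

lemma norm_perronKernel_log_div_le_log (hV : 1 ≤ V) (hX : 1 ≤ X) (hn : ⌊X⌋₊ ≤ n) :
    ‖perronKernel 1 V (Real.log (X / n))‖ ≤ 4 * Real.log (3 * V) := by
  have hfloor : (1 : ℝ) ≤ ⌊X⌋₊ := by exact_mod_cast Nat.le_floor (by exact_mod_cast hX)
  have hfn : (⌊X⌋₊ : ℝ) ≤ n := by exact_mod_cast hn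
  have hnpos : (0 : ℝ) < n := by linarith
  have hratio : X / n ≤ 2 := by
    rw [div_le_iff₀ hnpos]
    linarith [Nat.lt_floor_add_one X]
  have hlog : 0 ≤ Real.log (3 * V) := Real.log_nonneg (by linarith)
  refine (norm_perronKernel_one_le_log hV _).trans ?_
  rw [Real.exp_log (by positivity)]
  nlinarith

lemma norm_perronKernel_log_div_sub_le (hV : 4 * X ^ 2 ≤ V) (hn : 1 ≤ n) (hnX : (n + 1 : ℝ) ≤ X) :
    ‖perronKernel 1 V (Real.log (X / n)) - perronKernel 1 V 1‖ ≤ 2 / n := by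
  have hn1 : (1 : ℝ) ≤ n := by exact_mod_cast hn
  have hX : 0 < X := by linarith
  have hVpos : 0 < V := by nlinarith
  have hlog : 1 / X ≤ Real.log (X / n) := by
    refine le_trans ?_ (Real.one_sub_inv_le_log_of_pos (by positivity))
    rw [inv_div, le_sub_iff_add_le, ← add_div, div_le_one hX]
    linarith
  have hpos : 0 < Real.log (X / n) := (by positivity : 0 < 1 / X).trans_le hlog
  refine (norm_perronKernel_sub_perronKernel_le one_pos hVpos hpos one_pos).trans ?_
  rw [mul_one, mul_one, div_one, Real.exp_log (by positivity)]
  have hmain : X / n / Real.log (X / n) / V ≤ 1 / 4 / n :=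
    calc
      _ ≤ X / n / (1 / X) / (4 * X ^ 2) := by gcongr
      _ = _ := by field_simp
  have hone : Real.exp 1 / V ≤ 3 / 4 / n := by
    rw [div_le_div_iff₀ hVpos (by positivity)]
    nlinarith [Real.exp_one_lt_d9, Real.exp_pos 1]
  calc
    _ ≤ 2 * (1 / 4 / n + 3 / 4 / n : ℝ) := by gcongr
    _ = _ := by ring

lemma norm_perronKernel_log_div_le_inv (hX : 1 ≤ X) (hV : 4 * X ^ 2 ≤ V) (hn : X + 1 ≤ n) :
    ‖perronKernel 1 V (Real.log (X / n))‖ ≤ 1 / n := by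
  have hnpos : (0 : ℝ) < n := by linarith
  have hVpos : 0 < V := by nlinarith
  have hlog : 1 / (2 * X) ≤ -Real.log (X / n) := by
    rw [← Real.log_inv, inv_div]
    refine le_trans ?_ (Real.one_sub_inv_le_log_of_pos (by positivity))
    rw [inv_div, le_sub_iff_add_le, div_add_div _ _ (by positivity) hnpos.ne',
      div_le_one (by positivity)]
    nlinarith
  have hneg : Real.log (X / n) < 0 := by
    linarith [(by positivity : 0 < 1 / (2 * X))]
  refine (norm_perronKernel_le_of_neg one_pos hVpos hneg).trans ?_
  rw [mul_one, Real.exp_log (by positivity)]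
  calc
    _ ≤ 2 * (X / n / (1 / (2 * X)) / (4 * X ^ 2)) := by gcongr
    _ = _ := by field_simp; norm_num

lemma norm_perronKernel_log_div_sub_ite_le (hX : 1 ≤ X) (hV : 4 * X ^ 2 ≤ V) (hn : 1 ≤ n) :
    ‖perronKernel 1 V (Real.log (X / n)) - if n ∈ Icc 1 ⌊X⌋₊ then perronKernel 1 V 1 else 0‖ ≤
      2 / n + if n ∈ Icc ⌊X⌋₊ (⌊X⌋₊ + 1) then 4 * Real.log (3 * V) + 15 else 0 := by
  have hV1 : 1 ≤ V := by nlinarith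
  have hinv : 0 ≤ 1 / (n : ℝ) := by positivity
  have htwo : (2 / n : ℝ) = 1 / n + 1 / n := by ring
  rcases lt_or_ge n ⌊X⌋₊ with hlt | hge
  · rw [if_pos (mem_Icc.mpr ⟨hn, hlt.le⟩), if_neg fun h => (mem_Icc.mp h).1.not_gt hlt, add_zero]
    refine norm_perronKernel_log_div_sub_le hV hn ?_
    exact_mod_cast (Nat.le_floor_iff' n.succ_ne_zero).mp hlt
  rcases le_or_gt n (⌊X⌋₊ + 1) with hle | hgt
  · rw [if_pos (mem_Icc.mpr ⟨hge, hle⟩)]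
    have hcut : ‖if n ∈ Icc 1 ⌊X⌋₊ then perronKernel 1 V 1 else 0‖ ≤ 15 := by
      split_ifs
      · exact norm_perronKernel_one_one_le (by linarith)
      · norm_num
    linarith [norm_sub_le_of_le (norm_perronKernel_log_div_le_log hV1 hX hge) hcut]
  · rw [if_neg fun h => by rw [mem_Icc] at h; omega, if_neg fun h => (mem_Icc.mp h).2.not_gt hgt,
      sub_zero, add_zero]
    have hXn : X + 1 ≤ n := by
      have : (⌊X⌋₊ + 2 : ℝ) ≤ n := by exact_mod_cast hgt
      linarith [Nat.lt_floor_add_one X]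
    linarith [norm_perronKernel_log_div_le_inv hX hV hXn]

lemma hasSum_ite_mem {ι E : Type*} [DecidableEq ι] [AddCommMonoid E] [TopologicalSpace E]
    (s : Finset ι) (f : ι → E) : HasSum (fun i => if i ∈ s then f i else 0) (∑ i ∈ s, f i) := by
  have hsum := hasSum_sum_of_ne_finset_zero (L := SummationFilter.unconditional ι) (s := s)
    (f := fun i => if i ∈ s then f i else 0) fun i hi => if_neg hi
  rwa [sum_ite_mem, inter_self] at hsum

lemma summable_one_div_natCast_mul_sqrt : Summable fun n : ℕ => 1 / (n * √(n : ℝ)) := by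
  refine ((Real.summable_one_div_nat_rpow (p := 3 / 2)).mpr (by norm_num)).congr fun n => ?_
  rw [show (3 / 2 : ℝ) = 1 + 1 / 2 by norm_num, Real.rpow_add_of_nonneg n.cast_nonneg
    zero_le_one (by norm_num), Real.rpow_one, Real.sqrt_eq_rpow]

variable {d : ℕ}

lemma LSeries_term_mul_cpow_div (χ : DirichletCharacter ℂ d) (hX : 0 < X) (t u : ℝ) (n : ℕ) :
    LSeries.term (fun n => χ n) (3 / 2 + I * t + I * u) n * (X : ℂ) ^ (1 + I * u : ℂ) /
        (1 + I * u) * I =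
      I * (criticalTerm 0 t n * χ n) *
        (cexp (Real.log (X / n) * ((1 : ℝ) + u * I)) / ((1 : ℝ) + u * I)) := by
  rcases Nat.eq_zero_or_pos n with rfl | hn
  · simp [criticalTerm]
  have hnpos : (0 : ℝ) < n := by exact_mod_cast hn
  have hsqrt : 1 / √(n : ℝ) = Real.exp (-(Real.log n / 2)) := by
    rw [Real.exp_neg, one_div, Real.sqrt_eq_rpow, Real.rpow_def_of_pos hnpos, mul_one_div]
  have hexp : cexp (-(Real.log n * (3 / 2 + I * t + I * u))) *
        cexp (Real.log X * (1 + I * u)) =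
      cexp (-(Real.log n / 2) : ℝ) * cexp ((0 * (n : ℝ) - t * Real.log n : ℝ) * I) *
        cexp ((Real.log X - Real.log n : ℝ) * (1 + I * u)) := by
    rw [← Complex.exp_add, ← Complex.exp_add, ← Complex.exp_add]
    congr 1
    push_cast
    ring
  rw [LSeries.term_of_ne_zero hn.ne', Complex.cpow_def_of_ne_zero (Nat.cast_ne_zero.mpr hn.ne'),
    Complex.cpow_def_of_ne_zero (ofReal_ne_zero.mpr hX.ne'), ← Complex.ofReal_log hX.le,
    ← Complex.natCast_log, div_eq_mul_inv (χ n : ℂ), ← Complex.exp_neg, criticalTerm, hsqrt,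
    Complex.ofReal_exp, Real.log_div hX.ne' hnpos.ne', ofReal_one, mul_comm (u : ℂ)]
  linear_combination (χ n * (1 + I * u)⁻¹ * I) * hexp

lemma norm_I_mul_criticalTerm_mul_le (χ : DirichletCharacter ℂ d) (t : ℝ) (n : ℕ) :
    ‖I * (criticalTerm 0 t n * χ n)‖ ≤ 1 / √(n : ℝ) := by
  rw [norm_mul, norm_I, one_mul, norm_mul, norm_criticalTerm]
  exact mul_le_of_le_one_right (by positivity) (χ.norm_le_one _)

variable [NeZero d]

lemma hasSum_criticalTerm_mul_perronKernel (χ : DirichletCharacter ℂ d) (hX : 0 < X) (t V : ℝ) :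
    HasSum (fun n : ℕ => I * (criticalTerm 0 t n * χ n) * perronKernel 1 V (Real.log (X / n)))
      (∫ u in (-V)..V, χ.LFunction (3 / 2 + I * t + I * u) *
        (X : ℂ) ^ (1 + I * u : ℂ) / (1 + I * u) * I) := by
  simp only [perronKernel, ← intervalIntegral.integral_const_mul]
  refine intervalIntegral.hasSum_integral_of_dominated_convergence
    (fun n _ => X * (1 / (n * √(n : ℝ)))) (fun n => ?_) (fun n => .of_forall fun u _ => ?_)
    (.of_forall fun u _ => summable_one_div_natCast_mul_sqrt.mul_left X)
    intervalIntegrable_const (.of_forall fun u _ => ?_)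
  · exact (continuous_const.mul (continuous_exp_mul_div one_ne_zero _)).aestronglyMeasurable
  · rcases Nat.eq_zero_or_pos n with rfl | hn
    · simp [criticalTerm]
    have hexp := norm_exp_mul_div_le one_ne_zero (Real.log (X / n)) u
    rw [mul_one, Real.exp_log (by positivity), abs_one, div_one] at hexp
    refine (norm_mul_le_of_le (norm_I_mul_criticalTerm_mul_le χ t n) hexp).trans_eq ?_
    field_simp
  · have hre : 1 < (3 / 2 + I * t + I * u : ℂ).re := by
      norm_num
    have hL := (χ.LSeriesSummable_of_one_lt_re hre).hasSum
    rw [← LSeries, ← DirichletCharacter.LFunction_eq_LSeries χ hre] at hL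
    simpa only [LSeries_term_mul_cpow_div χ hX t u] using
      ((hL.mul_right ((X : ℂ) ^ (1 + I * u : ℂ))).div_const (1 + I * u)).mul_right I

lemma norm_integral_LFunction_le (χ : DirichletCharacter ℂ d) (hX : 1 ≤ X) (hV : 4 * X ^ 2 ≤ V)
    (t : ℝ) :
    ‖∫ u in (-V)..V, χ.LFunction (3 / 2 + I * t + I * u) *
        (X : ℂ) ^ (1 + I * u : ℂ) / (1 + I * u) * I‖ ≤
      15 * ‖∑ n ∈ Icc 1 ⌊X⌋₊, criticalTerm 0 t n * χ n‖ +
        (2 * ∑' n : ℕ, 1 / (n * √(n : ℝ)) + 2 * (4 * Real.log (3 * V) + 15)) := by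
  have hV1 : 1 ≤ V := by nlinarith
  have hlog : 0 ≤ Real.log (3 * V) := Real.log_nonneg (by linarith)
  have hmain : HasSum (fun n : ℕ => I * (criticalTerm 0 t n * χ n) *
        if n ∈ Icc 1 ⌊X⌋₊ then perronKernel 1 V 1 else 0)
      (I * (∑ n ∈ Icc 1 ⌊X⌋₊, criticalTerm 0 t n * χ n) * perronKernel 1 V 1) := by
    simp only [mul_ite, mul_zero, mul_sum, sum_mul]
    exact hasSum_ite_mem _ _
  have herror : HasSum (fun n : ℕ => 2 * (1 / (n * √(n : ℝ))) +
        if n ∈ Icc ⌊X⌋₊ (⌊X⌋₊ + 1) then 4 * Real.log (3 * V) + 15 else 0)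
      (2 * ∑' n : ℕ, 1 / (n * √(n : ℝ)) + 2 * (4 * Real.log (3 * V) + 15)) := by
    refine (summable_one_div_natCast_mul_sqrt.hasSum.mul_left 2).add ?_
    have hnear := hasSum_ite_mem (Icc ⌊X⌋₊ (⌊X⌋₊ + 1)) fun _ => 4 * Real.log (3 * V) + 15
    rwa [sum_const, Nat.card_Icc, show ⌊X⌋₊ + 1 + 1 - ⌊X⌋₊ = 2 by omega, nsmul_eq_mul,
      Nat.cast_two] at hnear
  have hdiff := ((hasSum_criticalTerm_mul_perronKernel χ (by positivity) t V).sub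
    hmain).norm_le_of_bounded herror fun n => ?_
  · refine (norm_le_norm_add_norm_sub' _ _).trans (add_le_add ?_ hdiff)
    rw [norm_mul, norm_mul, norm_I, one_mul, mul_comm]
    gcongr
    exact norm_perronKernel_one_one_le (by linarith)
  · rcases Nat.eq_zero_or_pos n with rfl | hn
    · simp only [criticalTerm, Nat.cast_zero, Real.sqrt_zero, div_zero, ofReal_zero, zero_mul,
        mul_zero, sub_self, norm_zero, zero_add]
      split_ifs <;> positivity
    have hn1 : (1 : ℝ) ≤ n := by exact_mod_cast hn
    have hsqrt : 1 / √(n : ℝ) ≤ 1 := (div_le_one (by positivity)).mpr (Real.one_le_sqrt.mpr hn1)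
    rw [← mul_sub]
    refine (norm_mul_le_of_le (norm_I_mul_criticalTerm_mul_le χ t n)
      (norm_perronKernel_log_div_sub_ite_le hX hV hn)).trans ?_
    rw [mul_add]
    refine add_le_add (le_of_eq (by field_simp)) (mul_le_of_le_one_left ?_ hsqrt)
    split_ifs <;> positivity

end PerronFormula

/-! ### Fourth moment of the Perron integral -/

section PerronMoment

open Finset

variable {d : ℕ} {X : ℝ}

lemma one_le_two_mul_log (hX : 2 ≤ X) : 1 ≤ 2 * Real.log X := by
  linarith [Real.log_two_gt_d9, Real.log_le_log two_pos hX]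

lemma pow_four_le_mul_pow_seven {a L : ℝ} (hL : 1 ≤ 2 * L) (ha : 1 ≤ a) :
    L ^ 4 ≤ 8 * (a * L ^ 7) :=
  calc
    L ^ 4 ≤ L ^ 4 * (a * (2 * L) ^ 3) := by
      exact le_mul_of_one_le_right (by positivity)
        (one_le_mul_of_one_le_of_one_le ha (one_le_pow₀ hL))
    _ = 8 * (a * L ^ 7) := by ring

lemma sumPrimitive_le_mul_add [NeZero d] {f g : DirichletCharacter ℂ d → ℝ} {a b : ℝ}
    (hfg : ∀ χ, χ.IsPrimitive → f χ ≤ a * g χ + b) (hb : 0 ≤ b) :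
    sumPrimitive d f ≤ a * sumPrimitive d g + d * b := by
  have hfin : {χ : DirichletCharacter ℂ d | χ.IsPrimitive}.Finite := Set.toFinite _
  have hcard : #hfin.toFinset ≤ d :=
    calc
      _ ≤ Nat.card (DirichletCharacter ℂ d) := by
          classical
          rw [Nat.card_eq_fintype_card]
          exact card_le_univ _
      _ = d.totient := DirichletCharacter.card_eq_totient_of_hasEnoughRootsOfUnity ℂ d
      _ ≤ d := Nat.totient_le d
  simp only [sumPrimitive, finsum_mem_eq_finite_toFinset_sum _ hfin]
  calc
    _ ≤ ∑ χ ∈ hfin.toFinset, (a * g χ + b) :=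
        sum_le_sum fun χ hχ => hfg χ (hfin.mem_toFinset.mp hχ)
    _ = a * ∑ χ ∈ hfin.toFinset, g χ + #hfin.toFinset * b := by
        rw [sum_add_distrib, ← mul_sum, sum_const, nsmul_eq_mul]
    _ ≤ _ := by gcongr

lemma norm_integral_LFunction_le_add_mul_log [NeZero d] (χ : DirichletCharacter ℂ d) (hd : 2 ≤ d)
    (hX : 1 ≤ X) (t : ℝ) :
    ‖∫ u in (-((d * X : ℝ) ^ 2))..((d * X : ℝ) ^ 2), χ.LFunction (3 / 2 + I * t + I * u) *
        (X : ℂ) ^ (1 + I * u : ℂ) / (1 + I * u) * I‖ ≤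
      15 * ‖∑ n ∈ Icc 1 ⌊X⌋₊, criticalTerm 0 t n * χ n‖ +
        (4 * ∑' n : ℕ, 1 / (n * √(n : ℝ)) + 92) * Real.log (d * X) := by
  have hdX : 2 * X ≤ d * X := by gcongr; exact_mod_cast hd
  have hV : 4 * X ^ 2 ≤ (d * X) ^ 2 := by nlinarith
  have hlog : 1 ≤ 2 * Real.log (d * X) := one_le_two_mul_log (by linarith)
  have hlogV : Real.log (3 * (d * X) ^ 2) ≤ 4 * Real.log (d * X) :=
    calc
      _ ≤ Real.log ((d * X) ^ 2 * (d * X) ^ 2) := by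
          gcongr
          nlinarith
      _ = _ := by rw [← pow_add, Real.log_pow]; norm_num
  have htsum : 0 ≤ ∑' n : ℕ, 1 / (n * √(n : ℝ)) := tsum_nonneg fun n => by positivity
  refine (norm_integral_LFunction_le χ hX hV t).trans ?_
  gcongr
  nlinarith

lemma norm_integral_LFunction_pow_four_le [NeZero d] (χ : DirichletCharacter ℂ d) (hd : 2 ≤ d)
    (hX : 1 ≤ X) (t : ℝ) :
    ‖∫ u in (-((d * X : ℝ) ^ 2))..((d * X : ℝ) ^ 2), χ.LFunction (3 / 2 + I * t + I * u) *
        (X : ℂ) ^ (1 + I * u : ℂ) / (1 + I * u) * I‖ ^ 4 ≤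
      8 * 15 ^ 4 * ‖∑ n ∈ Icc 1 ⌊X⌋₊, criticalTerm 0 t n * χ n‖ ^ 4 +
        8 * ((4 * ∑' n : ℕ, 1 / (n * √(n : ℝ)) + 92) * Real.log (d * X)) ^ 4 := by
  have hd1 : (1 : ℝ) ≤ d := by exact_mod_cast one_le_two.trans hd
  have hlog : 0 ≤ Real.log (d * X) := Real.log_nonneg (one_le_mul_of_one_le_of_one_le hd1 hX)
  refine (pow_le_pow_left₀ (norm_nonneg _)
    (norm_integral_LFunction_le_add_mul_log χ hd hX t) 4).trans
      ((add_pow_le (by positivity) (by positivity) 4).trans_eq ?_)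
  ring

lemma one_add_log_natCast_mul_floor_le (hd : 2 ≤ d) (hX : 1 ≤ X) :
    1 + Real.log (d * ⌊X⌋₊) ≤ 3 * Real.log (d * X) := by
  have hdX : 2 * X ≤ d * X := by gcongr; exact_mod_cast hd
  have hfloor : (1 : ℝ) ≤ ⌊X⌋₊ := by exact_mod_cast Nat.le_floor (by exact_mod_cast hX)
  have hmono : Real.log (d * ⌊X⌋₊) ≤ Real.log (d * X) := by
    gcongr
    exact Nat.floor_le (by linarith)
  linarith [one_le_two_mul_log (show 2 ≤ d * X by linarith)]

lemma sumPrimitive_norm_pow_four_criticalTerm_floor_le [NeZero d] (hd : 2 ≤ d) (hX : 1 ≤ X)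
    (t : ℝ) :
    sumPrimitive d (fun χ => ‖∑ n ∈ Icc 1 ⌊X⌋₊, criticalTerm 0 t n * χ n‖ ^ 4) ≤
      10 ^ 21 * (3 * Real.log (d * X)) ^ 7 * (d * (1 + |t|)) := by
  have hN : 1 ≤ ⌊X⌋₊ := Nat.le_floor (by exact_mod_cast hX)
  have hlogN : 0 ≤ Real.log (d * ⌊X⌋₊) := by exact_mod_cast Real.log_natCast_nonneg (d * ⌊X⌋₊)
  refine (sumPrimitive_norm_pow_four_criticalTerm_le hd t hN).trans ?_
  gcongr
  exact one_add_log_natCast_mul_floor_le hd hX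

theorem fourth_moment_perron_integral_general :
    ∃ C : ℝ, 0 ≤ C ∧ ∀ (d : ℕ) [NeZero d], 2 ≤ d → ∀ X : ℝ, 1 ≤ X → ∀ t : ℝ,
      sumPrimitive d (fun χ =>
        ‖∫ u in (-((d * X : ℝ) ^ 2))..((d * X : ℝ) ^ 2),
            (DirichletCharacter.LFunction χ (3 / 2 + Complex.I * t + Complex.I * u)) *
              (X : ℂ) ^ ((1 : ℂ) + Complex.I * u) / (1 + Complex.I * u) * Complex.I‖ ^ 4)
        ≤ C * d * (1 + |t|) * Real.log (d * X) ^ 7 := by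
  set A : ℝ := 4 * ∑' n : ℕ, 1 / (n * √(n : ℝ)) + 92
  refine ⟨8 * 15 ^ 4 * (10 ^ 21 * 3 ^ 7) + 8 * (8 * A ^ 4), by positivity, fun d _ hd X hX t => ?_⟩
  have hdX : (2 : ℝ) ≤ d * X := by nlinarith [(Nat.ofNat_le_cast (α := ℝ)).mpr hd]
  have hlow : Real.log (d * X) ^ 4 ≤ 8 * ((1 + |t|) * Real.log (d * X) ^ 7) :=
    pow_four_le_mul_pow_seven (by linarith [one_le_two_mul_log hdX]) (by linarith [abs_nonneg t])
  calc
    _ ≤ 8 * 15 ^ 4 * sumPrimitive d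
            (fun χ => ‖∑ n ∈ Icc 1 ⌊X⌋₊, criticalTerm 0 t n * χ n‖ ^ 4) +
          d * (8 * (A * Real.log (d * X)) ^ 4) :=
        sumPrimitive_le_mul_add (fun χ _ => norm_integral_LFunction_pow_four_le χ hd hX t)
          (by positivity)
    _ ≤ 8 * 15 ^ 4 * (10 ^ 21 * (3 * Real.log (d * X)) ^ 7 * (d * (1 + |t|))) +
          d * (8 * (A ^ 4 * (8 * ((1 + |t|) * Real.log (d * X) ^ 7)))) := by
        rw [mul_pow A]
        gcongr
        exact sumPrimitive_norm_pow_four_criticalTerm_floor_le hd hX t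
    _ = _ := by ring

end PerronMoment

/-- Fourth moment bound for the truncated Perron integral of `L'(s+1/2+it,χ) X^s / s` along the
vertical segment from `1 - iV` to `1 + iV` with `V = (dX)²`:
`Σ*_{χ mod d} |∫_{-V}^{V} L(3/2+it+iu, χ) X^{1+iu}/(1+iu) i du|⁴ ≤ C d (1+|t|) (log dX)⁸`. -/
theorem fourth_moment_perron_integral :
    ∃ C : ℝ, ∀ (d : ℕ) (hd : 2 ≤ d), ∀ X : ℝ, 2 ≤ X → ∀ t : ℝ, |t| ≤ X ^ 2 →
      sumPrimitive d (fun χ =>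
        ‖∫ u in (-((d * X : ℝ) ^ 2))..((d * X : ℝ) ^ 2),
            (@DirichletCharacter.LFunction d ⟨by omega⟩ χ
                (3 / 2 + Complex.I * t + Complex.I * u)) *
              (X : ℂ) ^ ((1 : ℂ) + Complex.I * u) / (1 + Complex.I * u) * Complex.I‖ ^ 4)
        ≤ C * d * (1 + |t|) * Real.log (d * X) ^ 8 := by
  obtain ⟨C, hC, hbound⟩ := fourth_moment_perron_integral_general
  refine ⟨C, fun d hd X hX t _ => ?_⟩
  have : NeZero d := ⟨by omega⟩
  have hdX : 4 ≤ d * X := by nlinarith [(Nat.ofNat_le_cast (α := ℝ)).mpr hd]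
  have hlog : 1 ≤ Real.log (d * X) :=
    (Real.le_log_iff_exp_le (by linarith)).mpr (by linarith [Real.exp_one_lt_d9])
  exact (hbound d hd X (by linarith) t).trans (by gcongr; norm_num)
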